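/- arXiv:2505.03736 — 6 statements merged into one kernel-verified Lean document; each statement's English description precedes it below -/
import Mathlib

section
/- For the vanilla decentralized normalized gradient method x_i^{t+1} = Σ_{r=1}^n w_{ir}(x_r^t − α ∇f_r(x_r^t)/‖∇f_r(x_r^t)‖): for every even n and every B ≥ 1, there exist local functions {f_i}_{i=1}^n satisfying Assumptions 1–2, a gradient oracle satisfying Assumption 3, a mixing matrix satisfying Assumption 4, and an initialization x₀, such that the associated parameters f_*, L, σ, W, x₀ are independent of B, and for every T ≥ 1 and every step size α > 0, the iterates satisfy (1/(nT)) Σ_{t=0}^{T−1} Σ_{i=1}^n E[‖∇f(x_i^t)‖] ≥ B. -/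
/-- For the vanilla decentralized normalized gradient method
`x_i^{t+1} = ∑ r, w_{ir} (x_r^t - α ∇f_r(x_r^t)/‖∇f_r(x_r^t)‖)`:
for every even `n > 0` and every `B ≥ 1`, there exist local functions `{f_i}` (on some
`ℝ^dim`) satisfying Assumptions 1–2, a gradient oracle satisfying Assumption 3 (here the
exact-gradient oracle, which satisfies it with noise level `σ = 0`), a mixing matrix `W`
satisfying Assumption 4 (nonnegative, primitive, doubly stochastic), and an initialization
`x₀`, such that the associated parameters `f_*, L, σ, W, x₀` are independent of `B`, and for
every horizon `T ≥ 1` and every step size `α > 0` the iterates satisfy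
`(1/(nT)) ∑_{t<T} ∑_i E‖∇f(x_i^t)‖ ≥ B` (the expectation being trivial since `σ = 0`). -/
theorem vanilla_normalized_dgd_fails (n : ℕ) (hn : 0 < n) (hneven : Even n) :
    ∃ (dim : ℕ) (L fstar σ : ℝ) (W : Matrix (Fin n) (Fin n) ℝ)
      (x0 : EuclideanSpace ℝ (Fin dim)),
      0 < L ∧ σ = 0 ∧
      (∀ i r, 0 ≤ W i r) ∧
      (∃ k : ℕ, 0 < k ∧ ∀ i r, (0 : ℝ) < (W ^ k : Matrix (Fin n) (Fin n) ℝ) i r) ∧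
      (∀ i, ∑ r, W i r = 1) ∧ (∀ r, ∑ i, W i r = 1) ∧
      ∀ B : ℝ, 1 ≤ B →
        ∃ (f : Fin n → EuclideanSpace ℝ (Fin dim) → ℝ)
          (gradf : Fin n → EuclideanSpace ℝ (Fin dim) → EuclideanSpace ℝ (Fin dim)),
          (∀ i z, HasGradientAt (f i) (gradf i z) z) ∧
          (∀ i z w, ‖gradf i z - gradf i w‖ ≤ L * ‖z - w‖) ∧
          IsGLB (Set.range fun z => (n : ℝ)⁻¹ * ∑ i, f i z) fstar ∧
          ∀ T : ℕ, 1 ≤ T → ∀ α : ℝ, 0 < α →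
            ∀ x : ℕ → Fin n → EuclideanSpace ℝ (Fin dim),
              (∀ i, x 0 i = x0) →
              (∀ t i, x (t + 1) i =
                ∑ r, W i r • (x t r - (α / ‖gradf r (x t r)‖) • gradf r (x t r))) →
              B ≤ ((n : ℝ) * (T : ℝ))⁻¹ *
                    ∑ t ∈ Finset.range T, ∑ i, ‖(n : ℝ)⁻¹ • ∑ j, gradf j (x t i)‖ := by
  have hn' : (n : ℝ) ≠ 0 := by positivity
  have hs : ∑ i : Fin n, (-1 : ℝ) ^ (i : ℕ) = 0 := by
    rw [Fin.sum_univ_eq_sum_range (fun i => (-1 : ℝ) ^ i) n, neg_one_geom_sum, if_pos hneven]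
  refine ⟨1, 1, 0, 0, Matrix.of fun _ _ => (n : ℝ)⁻¹, 0, one_pos, rfl, ?_, ⟨1, one_pos, ?_⟩, ?_, ?_, ?_⟩
  · intro i r; rw [Matrix.of_apply]; positivity
  · intro i r; rw [pow_one, Matrix.of_apply]; positivity
  · intro i; simp [hn']
  · intro i; simp [hn']
  intro B hB
  obtain ⟨e, he⟩ : ∃ e : EuclideanSpace ℝ (Fin 1), ‖e‖ = 1 :=
    ⟨EuclideanSpace.single 0 1, by simp⟩
  have hc : ∑ i : Fin n, (B + 2 * B * (-1 : ℝ) ^ (i : ℕ)) = n * B := by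
    rw [Finset.sum_add_distrib, ← Finset.mul_sum, hs]; simp
  have hf : ∀ z : EuclideanSpace ℝ (Fin 1), (n : ℝ)⁻¹ * ∑ i : Fin n,
      ((1 / 2) * ‖z‖ ^ 2 + (B + 2 * B * (-1 : ℝ) ^ (i : ℕ)) * inner ℝ e z + B ^ 2 / 2)
      = (1 / 2) * ‖z + B • e‖ ^ 2 := by
    intro z
    rw [Finset.sum_add_distrib, Finset.sum_add_distrib, ← Finset.sum_mul, ← Finset.sum_mul, hc,
      norm_add_sq_real, norm_smul, he, inner_smul_right, real_inner_comm]
    simp only [Finset.sum_const, Finset.card_univ, Fintype.card_fin, nsmul_eq_mul, mul_one,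
      Real.norm_eq_abs, sq_abs]
    field_simp
  refine ⟨fun i z => (1 / 2) * ‖z‖ ^ 2 + (B + 2 * B * (-1 : ℝ) ^ (i : ℕ)) * inner ℝ e z + B ^ 2 / 2,
    fun i z => z + (B + 2 * B * (-1 : ℝ) ^ (i : ℕ)) • e, ?_, ?_, ?_, ?_⟩
  · intro i z
    rw [hasGradientAt_iff_hasFDerivAt]
    have h1 := ((hasStrictFDerivAt_norm_sq z).hasFDerivAt).const_mul (1 / 2 : ℝ)
    have h2 := ((innerSL ℝ e).hasFDerivAt (x := z)).const_mul (B + 2 * B * (-1 : ℝ) ^ (i : ℕ))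
    refine ((h1.add h2).add_const (B ^ 2 / 2)).congr_fderiv ?_
    ext w
    simp
  · intro i z w; simp
  · constructor
    · rintro _ ⟨z, rfl⟩
      simp only [hf]; positivity
    · intro b hb
      have := hb ⟨-(B • e), rfl⟩
      simp only [hf] at this
      simpa using this
  · intro T hT α hα x hx0 hx
    have key : ∀ t i, x t i = 0 := by
      intro t
      induction t with
      | zero => exact hx0
      | succ t ih =>
        intro i
        rw [hx]
        simp only [ih, zero_add, zero_sub, Matrix.of_apply]
        have hcoef : ∀ r : Fin n, (α / ‖(B + 2 * B * (-1 : ℝ) ^ (r : ℕ)) • e‖) •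
            (B + 2 * B * (-1 : ℝ) ^ (r : ℕ)) • e = ((-1 : ℝ) ^ (r : ℕ) * α) • e := by
          intro r
          rw [norm_smul, he, mul_one, smul_smul, Real.norm_eq_abs]
          congr 1
          rcases neg_one_pow_eq_or ℝ (r : ℕ) with h | h <;> rw [h]
          · rw [abs_of_pos (by linarith)]
            have : B + 2 * B * 1 ≠ 0 := by linarith
            field_simp
          · rw [abs_of_neg (by linarith)]
            have : -(B + 2 * B * -1) ≠ 0 := by linarith
            rw [div_mul_eq_mul_div, div_eq_iff this]; ring
        simp only [hcoef]
        rw [← Finset.smul_sum, Finset.sum_neg_distrib, ← Finset.sum_smul, ← Finset.sum_mul, hs]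
        simp
    have hg : ‖(n : ℝ)⁻¹ • ((n : ℝ) * B) • e‖ = B := by
      rw [smul_smul, inv_mul_cancel_left₀ hn', norm_smul, he, mul_one, Real.norm_eq_abs,
        abs_of_pos (by linarith)]
    simp only [key, zero_add, ← Finset.sum_smul, hc, hg]
    have hT' : (T : ℝ) ≠ 0 := by positivity
    simp only [Finset.sum_const, Finset.card_univ, Fintype.card_fin, Finset.card_range,
      nsmul_eq_mul]
    apply le_of_eq
    field_simp
end

section
/- Under Assumptions 1–2, along any trajectory of GT-NSGDm in which all y_i^t are nonzero, defining the gradient estimation error ε^t := ȳ^t − ∇f(x̄^t), the following deterministic inequality holds for every horizon T ≥ 1: Σ_{t=0}^{T−1} α‖∇f(x̄^t)‖ ≤ f(x̄⁰) − f_* + Σ_{t=0}^{T−1} 2α‖ε^t‖ + Σ_{t=0}^{T−1} (α/n) Σ_{i=1}^n ‖ȳ^t − y_i^t‖ + Σ_{t=0}^{T−1} (L/2)α². -/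
theorem aux_descent {d : ℕ} (F : EuclideanSpace ℝ (Fin d) → ℝ)
    (G : EuclideanSpace ℝ (Fin d) → EuclideanSpace ℝ (Fin d))
    (hG : ∀ z, HasGradientAt F (G z) z) (L : ℝ)
    (hL : ∀ z w, ‖G z - G w‖ ≤ L * ‖z - w‖) (z h : EuclideanSpace ℝ (Fin d)) :
    F (z + h) ≤ F z + inner ℝ (G z) h + L / 2 * ‖h‖ ^ 2 := by
  have hd : ∀ s : ℝ, HasDerivAt
      (fun s : ℝ => F (z + s • h) - s * inner ℝ (G z) h - L / 2 * ‖h‖ ^ 2 * s ^ 2)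
      (inner ℝ (G (z + s • h)) h - inner ℝ (G z) h - L * ‖h‖ ^ 2 * s) s := by
    intro s
    have h1 : HasDerivAt (fun s : ℝ => z + s • h) h s := by
      simpa using ((hasDerivAt_id s).smul_const h).const_add z
    have h2 := (hG (z + s • h)).hasFDerivAt.comp_hasDerivAt s h1
    have h3 := (h2.sub ((hasDerivAt_id s).mul_const (inner ℝ (G z) h))).sub
      (((hasDerivAt_id s).pow 2).const_mul (L / 2 * ‖h‖ ^ 2))
    refine h3.congr_deriv ?_
    simp
    ring
  have hanti : AntitoneOn
      (fun s : ℝ => F (z + s • h) - s * inner ℝ (G z) h - L / 2 * ‖h‖ ^ 2 * s ^ 2)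
      (Set.Ici 0) := by
    apply antitoneOn_of_deriv_nonpos (convex_Ici 0)
    · exact fun s _ => (hd s).continuousAt.continuousWithinAt
    · exact fun s _ => (hd s).differentiableAt.differentiableWithinAt
    · intro s hs
      rw [interior_Ici] at hs
      have hs : 0 < s := hs
      rw [(hd s).deriv, ← inner_sub_left]
      have h1 := real_inner_le_norm (G (z + s • h) - G z) h
      have h2 := hL (z + s • h) z
      rw [add_sub_cancel_left, norm_smul, Real.norm_of_nonneg hs.le] at h2
      have h3 := mul_le_mul_of_nonneg_right h2 (norm_nonneg h)
      nlinarith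
  have := hanti (Set.mem_Ici.2 le_rfl) (Set.mem_Ici.2 zero_le_one) zero_le_one
  simp at this
  linarith

theorem aux_inner {d n : ℕ} (hn : 0 < n) (G : EuclideanSpace ℝ (Fin d))
    (y : Fin n → EuclideanSpace ℝ (Fin d)) (hy : ∀ i, y i ≠ 0) :
    ‖G‖ - 2 * ‖(n : ℝ)⁻¹ • (∑ i, y i) - G‖
      - (n : ℝ)⁻¹ * ∑ i, ‖(n : ℝ)⁻¹ • (∑ j, y j) - y i‖ ≤
    (n : ℝ)⁻¹ * ∑ i, inner ℝ G (‖y i‖⁻¹ • y i) := by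
  have hn' : (0 : ℝ) < n := by exact_mod_cast hn
  set b := (n : ℝ)⁻¹ • (∑ i, y i) with hb
  have hi : ∀ i, ‖y i‖ - ‖b - G‖ - ‖b - y i‖ ≤ inner ℝ G (‖y i‖⁻¹ • y i) := by
    intro i
    have hp : 0 < ‖y i‖ := norm_pos_iff.2 (hy i)
    have e1 : inner ℝ (y i) (‖y i‖⁻¹ • y i) = ‖y i‖ := by
      rw [inner_smul_right, real_inner_self_eq_norm_sq]; field_simp
    have e2 : ‖‖y i‖⁻¹ • y i‖ = 1 := by
      rw [norm_smul, norm_inv, norm_norm]; field_simp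
    have e3 := real_inner_le_norm (y i - G) (‖y i‖⁻¹ • y i)
    rw [e2, mul_one, inner_sub_left, e1] at e3
    have e4 : ‖y i - G‖ ≤ ‖b - G‖ + ‖b - y i‖ := by
      have := norm_sub_le (b - G) (b - y i)
      rwa [sub_sub_sub_cancel_left] at this
    linarith
  have hs := Finset.sum_le_sum (fun i (_ : i ∈ Finset.univ) => hi i)
  rw [Finset.sum_sub_distrib, Finset.sum_sub_distrib] at hs
  simp only [Finset.sum_const, Finset.card_univ, Fintype.card_fin, nsmul_eq_mul] at hs
  have hm := mul_le_mul_of_nonneg_left hs (inv_nonneg.2 hn'.le)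
  have hbn : ‖b‖ ≤ (n : ℝ)⁻¹ * ∑ i, ‖y i‖ := by
    rw [hb, norm_smul, Real.norm_of_nonneg (inv_nonneg.2 hn'.le)]
    gcongr
    exact norm_sum_le _ _
  have hG : ‖G‖ ≤ ‖b‖ + ‖b - G‖ := by
    have := norm_sub_le b (b - G)
    rwa [sub_sub_cancel] at this
  rw [mul_sub, mul_sub, inv_mul_cancel_left₀ hn'.ne'] at hm
  linarith

/-- (Descent lemma for the network average.)  Under Assumptions 1–2, along
any (deterministic realization of a) trajectory of GT-NSGDm in which all `y_i^t` are
nonzero, defining the gradient estimation error `ε^t := ȳ^t - ∇f(x̄^t)`, the following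
deterministic inequality holds for every horizon `T ≥ 1`:
`∑_{t<T} α ‖∇f(x̄^t)‖ ≤ f(x̄⁰) - f_* + ∑_{t<T} 2α‖ε^t‖
  + ∑_{t<T} (α/n) ∑_i ‖ȳ^t - y_i^t‖ + ∑_{t<T} (L/2) α²`.
Here `f = (1/n) ∑ i, f i`, `x̄^t`, `ȳ^t` are network averages, the stochastic gradients
`g_i^t` are arbitrary vectors (one realization), and `W` is doubly stochastic. -/
theorem descent_lemma_network_average (d n : ℕ) (hn : 0 < n)
    (f : Fin n → EuclideanSpace ℝ (Fin d) → ℝ)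
    (gradf : Fin n → EuclideanSpace ℝ (Fin d) → EuclideanSpace ℝ (Fin d))
    (hgrad : ∀ i z, HasGradientAt (f i) (gradf i z) z)
    (L : ℝ)
    (hsmooth : ∀ i z w, ‖gradf i z - gradf i w‖ ≤ L * ‖z - w‖)
    (fstar : ℝ)
    (hfstar : IsGLB (Set.range fun z => (n : ℝ)⁻¹ * ∑ i, f i z) fstar)
    (W : Matrix (Fin n) (Fin n) ℝ)
    (hrow : ∀ i, ∑ r, W i r = 1) (hcol : ∀ r, ∑ i, W i r = 1)
    (α β : ℝ) (hα : 0 < α) (hβ : β ∈ Set.Ico (0 : ℝ) 1)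
    (xbar0 : EuclideanSpace ℝ (Fin d))
    (x v y g : ℕ → Fin n → EuclideanSpace ℝ (Fin d))
    (hx0 : ∀ i, x 0 i = xbar0)
    (hv0 : ∀ i, v 0 i = (1 - β) • g 0 i)
    (hvrec : ∀ t i, v (t + 1) i = β • v t i + (1 - β) • g (t + 1) i)
    (hy0 : ∀ i, y 0 i = ∑ r, W i r • v 0 r)
    (hyrec : ∀ t i, y (t + 1) i = ∑ r, W i r • (y t r + v (t + 1) r - v t r))
    (hxrec : ∀ t i, x (t + 1) i = ∑ r, W i r • (x t r - (α / ‖y t r‖) • y t r))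
    (hynz : ∀ t i, y t i ≠ 0)
    (T : ℕ) (hT : 1 ≤ T) :
    ∑ t ∈ Finset.range T, α * ‖(n : ℝ)⁻¹ • ∑ i, gradf i ((n : ℝ)⁻¹ • ∑ j, x t j)‖ ≤
      ((n : ℝ)⁻¹ * ∑ i, f i xbar0 - fstar) +
      (∑ t ∈ Finset.range T, 2 * α *
        ‖(n : ℝ)⁻¹ • (∑ i, y t i) - (n : ℝ)⁻¹ • ∑ i, gradf i ((n : ℝ)⁻¹ • ∑ j, x t j)‖) +
      (∑ t ∈ Finset.range T, (α / n) * ∑ i, ‖(n : ℝ)⁻¹ • (∑ j, y t j) - y t i‖) +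
      (∑ t ∈ Finset.range T, (L / 2) * α ^ 2) := by
  have hn' : (0 : ℝ) < n := by exact_mod_cast hn
  have hL0 : 0 ≤ L := by
    have h1 := (norm_nonneg _).trans (hsmooth ⟨0, hn⟩ (y 0 ⟨0, hn⟩) 0)
    rw [sub_zero] at h1
    exact nonneg_of_mul_nonneg_left h1 (norm_pos_iff.2 (hynz 0 ⟨0, hn⟩))
  set F : EuclideanSpace ℝ (Fin d) → ℝ := fun z => (n : ℝ)⁻¹ * ∑ i, f i z with hF
  set G : EuclideanSpace ℝ (Fin d) → EuclideanSpace ℝ (Fin d) :=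
    fun z => (n : ℝ)⁻¹ • ∑ i, gradf i z with hGdef
  have hG : ∀ z, HasGradientAt F (G z) z := by
    intro z
    have h1 := (HasFDerivAt.fun_sum (u := Finset.univ)
      (fun i _ => (hgrad i z).hasFDerivAt)).const_mul ((n : ℝ)⁻¹)
    rw [hasGradientAt_iff_hasFDerivAt]
    refine h1.congr_fderiv ?_
    simp [hGdef]
  have hGL : ∀ z w, ‖G z - G w‖ ≤ L * ‖z - w‖ := by
    intro z w
    simp only [hGdef]
    rw [← smul_sub, ← Finset.sum_sub_distrib, norm_smul,
      Real.norm_of_nonneg (inv_nonneg.2 hn'.le)]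
    have h1 := norm_sum_le_of_le Finset.univ (fun i _ => hsmooth i z w)
    simp only [Finset.sum_const, Finset.card_univ, Fintype.card_fin, nsmul_eq_mul] at h1
    have hm := mul_le_mul_of_nonneg_left h1 (inv_nonneg.2 hn'.le)
    rwa [inv_mul_cancel_left₀ hn'.ne'] at hm
  set X : ℕ → EuclideanSpace ℝ (Fin d) := fun t => (n : ℝ)⁻¹ • ∑ j, x t j with hX
  have hX0 : X 0 = xbar0 := by
    simp only [hX, hx0, Finset.sum_const, Finset.card_univ, Fintype.card_fin]
    rw [← Nat.cast_smul_eq_nsmul ℝ, smul_smul, inv_mul_cancel₀ hn'.ne', one_smul]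
  have hXs : ∀ t, X (t + 1) =
      X t + (-(α * (n : ℝ)⁻¹)) • ∑ i, ‖y t i‖⁻¹ • y t i := by
    intro t
    simp only [hX, hxrec]
    rw [Finset.sum_comm]
    simp only [← Finset.sum_smul, hcol, one_smul]
    rw [Finset.sum_sub_distrib, smul_sub, neg_smul, ← sub_eq_add_neg]
    congr 1
    rw [mul_comm, mul_smul, Finset.smul_sum (r := α)]
    simp only [smul_smul, div_eq_mul_inv]
  have hstep : ∀ t, α * ‖G (X t)‖ ≤ F (X t) - F (X (t + 1)) +
      2 * α * ‖(n : ℝ)⁻¹ • (∑ i, y t i) - G (X t)‖ +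
      (α / n) * ∑ i, ‖(n : ℝ)⁻¹ • (∑ j, y t j) - y t i‖ + (L / 2) * α ^ 2 := by
    intro t
    have h1 := aux_descent F G hG L hGL (X t)
      ((-(α * (n : ℝ)⁻¹)) • ∑ i, ‖y t i‖⁻¹ • y t i)
    rw [← hXs, inner_smul_right, inner_sum] at h1
    have h2 := mul_le_mul_of_nonneg_left (aux_inner hn (G (X t)) (y t) (hynz t)) hα.le
    have h3 : ‖(-(α * (n : ℝ)⁻¹)) • ∑ i, ‖y t i‖⁻¹ • y t i‖ ≤ α := by
      rw [norm_smul, norm_neg, Real.norm_of_nonneg (by positivity)]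
      have h4 : ‖∑ i, ‖y t i‖⁻¹ • y t i‖ ≤ ∑ i : Fin n, (1 : ℝ) := by
        refine norm_sum_le_of_le _ (fun i _ => ?_)
        have hp : 0 < ‖y t i‖ := norm_pos_iff.2 (hynz t i)
        rw [norm_smul, norm_inv, norm_norm, inv_mul_cancel₀ hp.ne']
      simp only [Finset.sum_const, Finset.card_univ, Fintype.card_fin, nsmul_eq_mul,
        mul_one] at h4
      calc _ ≤ α * (n : ℝ)⁻¹ * n := by gcongr
        _ = α := by field_simp
    have h5 : L / 2 * ‖(-(α * (n : ℝ)⁻¹)) • ∑ i, ‖y t i‖⁻¹ • y t i‖ ^ 2 ≤ L / 2 * α ^ 2 := by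
      gcongr
    rw [div_eq_mul_inv]
    linarith
  have hsum := Finset.sum_le_sum (fun t (_ : t ∈ Finset.range T) => hstep t)
  rw [Finset.sum_add_distrib, Finset.sum_add_distrib, Finset.sum_add_distrib,
    Finset.sum_range_sub', hX0] at hsum
  have hlb : fstar ≤ F (X T) := hfstar.1 ⟨X T, rfl⟩
  have hgoal := hsum.trans (add_le_add_left (add_le_add_left (add_le_add_left
    (sub_le_sub_left hlb (F xbar0)) _) _) _)
  exact hgoal
end

section
/- Consider the consensus recursion x^{t+1} = (W ⊗ I_d)(x^t − α u^t) on ℝ^{nd}, where all blocks of x^0 are equal (x_i^0 = x̄⁰ for all i), each direction block satisfies ‖u_i^t‖ ≤ 1, W is doubly stochastic, and λ := ‖W − (1/n)1_n 1_nᵀ‖₂ < 1. Then for every t ≥ 0, the consensus errors satisfy (1/n) Σ_{i=1}^n ‖x_i^t − x̄^t‖ ≤ αλ/(1−λ) and ‖x^t − 1_n ⊗ x̄^t‖ ≤ α√n λ/(1−λ), where x̄^t = (1/n)Σ_i x_i^t. In particular, these bounds hold for the iterates x_i^t of GT-NSGDm, whose direction blocks u_i^t = y_i^t/‖y_i^t‖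 are unit vectors. -/
theorem aux_contract (d n : ℕ) (M : Matrix (Fin n) (Fin n) ℝ)
    (z : Fin n → EuclideanSpace ℝ (Fin d)) :
    Real.sqrt (∑ i, ‖∑ r, M i r • z r‖ ^ 2) ≤
      ‖Matrix.toEuclideanCLM (𝕜 := ℝ) (n := Fin n) M‖ * Real.sqrt (∑ r, ‖z r‖ ^ 2) := by
  set L := ‖Matrix.toEuclideanCLM (𝕜 := ℝ) (n := Fin n) M‖ with hL
  have hL0 : 0 ≤ L := norm_nonneg _
  have key : ∀ k : Fin d, ∑ i, (∑ r, M i r * z r k) ^ 2 ≤ L ^ 2 * ∑ r, (z r k) ^ 2 := by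
    intro k
    have h := (Matrix.toEuclideanCLM (𝕜 := ℝ) (n := Fin n) M).le_opNorm
      (WithLp.toLp 2 (fun r => z r k))
    have h2 := pow_le_pow_left₀ (norm_nonneg _) h 2
    rw [mul_pow, EuclideanSpace.real_norm_sq_eq, EuclideanSpace.real_norm_sq_eq] at h2
    simpa [Matrix.mulVec, dotProduct] using h2
  apply Real.sqrt_le_iff.2
  refine ⟨by positivity, ?_⟩
  rw [mul_pow, Real.sq_sqrt (by positivity)]
  simp only [EuclideanSpace.real_norm_sq_eq]
  rw [Finset.sum_comm, Finset.sum_comm (f := fun r k => (z r k) ^ 2), Finset.mul_sum]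
  refine Finset.sum_le_sum fun k _ => ?_
  simpa using key k

theorem aux_mink (d n : ℕ) (e v : Fin n → EuclideanSpace ℝ (Fin d)) (α : ℝ) (hα : 0 < α)
    (hv : ∀ i, ‖v i‖ ≤ 1) :
    Real.sqrt (∑ i, ‖e i - α • v i‖ ^ 2) ≤
      Real.sqrt (∑ i, ‖e i‖ ^ 2) + α * Real.sqrt n := by
  have h := norm_sub_le (WithLp.toLp 2 e : PiLp 2 (fun _ : Fin n => EuclideanSpace ℝ (Fin d)))
    (WithLp.toLp 2 (fun i => α • v i))
  rw [PiLp.norm_eq_of_L2, PiLp.norm_eq_of_L2, PiLp.norm_eq_of_L2] at h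
  simp only [PiLp.sub_apply] at h
  refine h.trans ?_
  gcongr
  apply Real.sqrt_le_iff.2
  refine ⟨by positivity, ?_⟩
  rw [mul_pow, Real.sq_sqrt (by positivity)]
  calc ∑ i, ‖α • v i‖ ^ 2 ≤ ∑ i : Fin n, α ^ 2 := by
        refine Finset.sum_le_sum fun i _ => ?_
        rw [norm_smul, Real.norm_of_nonneg hα.le]
        have := hv i
        gcongr
        nlinarith
    _ = α ^ 2 * n := by simp [mul_comm]

/-- Consider the consensus recursion `x^{t+1} = (W ⊗ I_d)(x^t - α u^t)`
on `ℝ^{nd}` (stacked vectors modeled as maps `Fin n → EuclideanSpace ℝ (Fin d)`, the action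
of `W ⊗ I_d` being the blockwise product), where all blocks of `x^0` are equal, each
direction block satisfies `‖u_i^t‖ ≤ 1`, `W` is doubly stochastic, and
`lam := ‖W - (1/n) 1ₙ 1ₙᵀ‖₂ < 1` (`ℓ₂` operator norm).  Then for every `t ≥ 0`:
`(1/n) ∑ i, ‖x_i^t - x̄^t‖ ≤ α lam/(1-lam)` and
`‖x^t - 1ₙ ⊗ x̄^t‖ = (∑ i, ‖x_i^t - x̄^t‖²)^{1/2} ≤ α √n lam/(1-lam)`.
In particular this applies to the iterates of GT-NSGDm, whose direction blocks
`u_i^t = y_i^t/‖y_i^t‖` are unit vectors. -/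
theorem consensus_error_bound (d n : ℕ) (hn : 0 < n)
    (W : Matrix (Fin n) (Fin n) ℝ)
    (hrow : ∀ i, ∑ r, W i r = 1) (hcol : ∀ r, ∑ i, W i r = 1)
    (lam : ℝ)
    (hlam : lam = ‖Matrix.toEuclideanCLM (𝕜 := ℝ) (n := Fin n)
      (W - (n : ℝ)⁻¹ • Matrix.of (fun _ _ => (1 : ℝ)))‖)
    (hlam1 : lam < 1)
    (α : ℝ) (hα : 0 < α)
    (xbar0 : EuclideanSpace ℝ (Fin d))
    (x u : ℕ → Fin n → EuclideanSpace ℝ (Fin d))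
    (hx0 : ∀ i, x 0 i = xbar0)
    (hu : ∀ t i, ‖u t i‖ ≤ 1)
    (hrec : ∀ t i, x (t + 1) i = ∑ r, W i r • (x t r - α • u t r)) :
    ∀ t : ℕ,
      (n : ℝ)⁻¹ * (∑ i, ‖x t i - (n : ℝ)⁻¹ • ∑ j, x t j‖) ≤ α * lam / (1 - lam) ∧
      Real.sqrt (∑ i, ‖x t i - (n : ℝ)⁻¹ • ∑ j, x t j‖ ^ 2) ≤
        α * Real.sqrt n * lam / (1 - lam) := by
  have hn' : (n : ℝ) ≠ 0 := by positivity
  have hL0 : 0 ≤ lam := hlam ▸ norm_nonneg _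
  have h1L : 0 < 1 - lam := by linarith
  have hsec : ∀ t : ℕ, Real.sqrt (∑ i, ‖x t i - (n : ℝ)⁻¹ • ∑ j, x t j‖ ^ 2) ≤
        α * Real.sqrt n * lam / (1 - lam) := by
    intro t
    induction t with
    | zero =>
      have : ∀ i, x 0 i - (n : ℝ)⁻¹ • ∑ j, x 0 j = 0 := by
        intro i
        simp only [hx0, Finset.sum_const, Finset.card_univ, Fintype.card_fin]
        rw [← Nat.cast_smul_eq_nsmul ℝ, smul_smul, inv_mul_cancel₀ hn', one_smul, sub_self]
      simp only [this]
      simp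
      positivity
    | succ t ih =>
      have hmean : ∑ j, x (t + 1) j = ∑ r, (x t r - α • u t r) := by
        simp only [hrec]
        rw [Finset.sum_comm]
        refine Finset.sum_congr rfl fun r _ => ?_
        rw [← Finset.sum_smul, hcol, one_smul]
      have hstep : ∀ i, x (t + 1) i - (n : ℝ)⁻¹ • ∑ j, x (t + 1) j =
          ∑ r, (W - (n : ℝ)⁻¹ • Matrix.of (fun _ _ => (1 : ℝ)) : Matrix (Fin n) (Fin n) ℝ) i r •
            ((x t r - (n : ℝ)⁻¹ • ∑ j, x t j) - α • u t r) := by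
        intro i
        have hz : ∑ r, (W - (n : ℝ)⁻¹ • Matrix.of (fun _ _ => (1 : ℝ)) : Matrix (Fin n) (Fin n) ℝ) i r = 0 := by
          simp [Finset.sum_sub_distrib, hrow, hn']
        have : ∀ r, (x t r - (n : ℝ)⁻¹ • ∑ j, x t j) - α • u t r =
          (x t r - α • u t r) - (n : ℝ)⁻¹ • ∑ j, x t j := fun r => by abel
        simp only [this, smul_sub _ (_ - _) _, Finset.sum_sub_distrib]
        rw [← Finset.sum_smul, hz, zero_smul, sub_zero, hmean, hrec, Finset.smul_sum,
          ← Finset.sum_sub_distrib]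
        refine Finset.sum_congr rfl fun r _ => ?_
        simp [sub_smul]
      have hA := aux_contract d n (W - (n : ℝ)⁻¹ • Matrix.of (fun _ _ => (1 : ℝ)))
        (fun r => (x t r - (n : ℝ)⁻¹ • ∑ j, x t j) - α • u t r)
      rw [← hlam] at hA
      simp only [← hstep] at hA
      have hB := aux_mink d n (fun r => x t r - (n : ℝ)⁻¹ • ∑ j, x t j) (u t) α hα (hu t)
      calc _ ≤ _ := hA
        _ ≤ lam * (α * Real.sqrt n * lam / (1 - lam) + α * Real.sqrt n) := by
          gcongr
          exact hB.trans (by gcongr)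
        _ = _ := by field_simp; ring
  intro t
  refine ⟨?_, hsec t⟩
  have hs := hsec t
  set a : Fin n → ℝ := fun i => ‖x t i - (n : ℝ)⁻¹ • ∑ j, x t j‖ with ha
  have hc := sq_sum_le_card_mul_sum_sq (s := Finset.univ) (f := a)
  rw [Finset.card_univ, Fintype.card_fin] at hc
  have h2 : ∑ i, a i ≤ Real.sqrt n * Real.sqrt (∑ i, a i ^ 2) := by
    rw [← Real.sqrt_mul (by positivity)]
    exact Real.le_sqrt_of_sq_le hc
  calc (n : ℝ)⁻¹ * ∑ i, a i
      ≤ (n : ℝ)⁻¹ * (Real.sqrt n * (α * Real.sqrt n * lam / (1 - lam))) := by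
        gcongr
        exact h2.trans (by gcongr)
    _ = (n : ℝ)⁻¹ * (Real.sqrt n * Real.sqrt n) * (α * lam / (1 - lam)) := by ring
    _ = α * lam / (1 - lam) := by
        rw [Real.mul_self_sqrt (by positivity), inv_mul_cancel₀ hn', one_mul]
end

section
/- Let {d_t}_{t≥1} be a sequence of integrable random vectors in ℝ^d forming a martingale difference sequence with respect to its natural filtration, i.e. E[d_t | F_{t−1}] = 0 for all t, where F_t = σ(d_1, …, d_t). Then for any p ∈ [1,2] and every T ≥ 0, E[‖Σ_{t=1}^T d_t‖] ≤ 2√2 · E[(Σ_{t=1}^T ‖d_t‖^p)^{1/p}]. -/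
open MeasureTheory

lemma det_aux (r a b : ℝ) (h2 : r^2 = 2) (h2a : 1.414 ≤ r) (h2b : r ≤ 1.4143) (ha0 : 0 ≤ a)
    (hab : 2 * r * a ≤ b * (1 + a)) :
    r - a + (1 - a^2 + (1 - b^2)) / 2 ≤ 2 * r * (1 - a) := by
  have hb2 : 8 * a^2 ≤ b^2 * (1+a)^2 := by
    have h : (2 * r * a)^2 ≤ (b * (1+a))^2 := by gcongr
    have e : (2 * r * a)^2 = 8 * a^2 := by linear_combination 4 * a^2 * h2
    rw [e, mul_pow] at h
    exact h
  have h7 : 0 ≤ (0.414 - 1.8286 * a + a^2/2) * (1+a)^2 + 4 * a^2 := by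
    nlinarith [sq_nonneg (a^2-0.8286*a), sq_nonneg (a-0.5477)]
  have h8 : 0 ≤ (0.414 - 1.8286 * a + a^2/2 + b^2/2) * (1+a)^2 := by linarith
  have h9 := nonneg_of_mul_nonneg_left h8 (by positivity)
  nlinarith [mul_nonneg ha0 (sub_nonneg.2 h2b)]

lemma det_real (v d s R q y : ℝ) (hv : 0 ≤ v) (hd : 0 ≤ d) (hs : 0 ≤ s) (hR : 0 < R) (hq : 0 < q)
   (hR2 : R^2 = s^2 + v^2) (hq2 : q^2 = v^2 + d^2) (hy : |y| ≤ s * d) :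
   Real.sqrt (R^2 + 2*y + 2*d^2) ≤ R + y / R + 2 * Real.sqrt 2 * (q - v) := by
  have h2 : Real.sqrt 2 ^ 2 = 2 := Real.sq_sqrt (by norm_num)
  have h2a : 1.414 ≤ Real.sqrt 2 := Real.le_sqrt_of_sq_le (by norm_num)
  have h2b : Real.sqrt 2 ≤ 1.4143 := (Real.sqrt_le_left (by norm_num)).2 (by norm_num)
  set r := Real.sqrt 2
  have hy1 := (abs_le.1 hy).1
  have hvq : v ≤ q := by nlinarith
  have hvR : v ≤ R := by nlinarith
  have hsR : s ≤ R := by nlinarith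
  have hdq : d ≤ q := by nlinarith
  by_cases hc : q + v ≤ 2 * r * R
  · have h1 : d^2 / R ≤ 2 * r * (q - v) := by
      rw [div_le_iff₀ hR]
      have : d^2 = (q - v) * (q + v) := by linarith
      rw [this]
      nlinarith [mul_le_mul_of_nonneg_left hc (sub_nonneg.2 hvq)]
    have h3 : Real.sqrt (R^2 + 2*y + 2*d^2) ≤ R + y / R + d^2 / R := by
      have e : R + y / R + d^2 / R = (R^2 + y + d^2) / R := by field_simp
      rw [e]
      apply Real.sqrt_le_iff.2
      have : 0 ≤ R^2 + y + d^2 := by nlinarith [mul_le_mul_of_nonneg_right hsR hd, sq_nonneg (R - d)]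
      refine ⟨by positivity, ?_⟩
      rw [div_pow, le_div_iff₀ (by positivity)]
      nlinarith [sq_nonneg (y + d^2)]
    linarith
  · push Not at hc
    have hRq : R ≤ q := by nlinarith
    have hsd : s ≤ d := by nlinarith
    obtain ⟨z, hz⟩ : ∃ z, z = (y + s * d) / R := ⟨_, rfl⟩
    have hz0 : 0 ≤ z := by rw [hz]; apply div_nonneg <;> linarith
    have hzR : z * R = y + s * d := by rw [hz]; field_simp
    have h3 : Real.sqrt (R^2 + 2*y + 2*d^2) ≤ r * q + z := by
      set B := R^2 - 2*(s*d) + 2 * d^2 with hB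
      have hBq : q^2 ≤ B := by nlinarith [sq_nonneg (d - s)]
      have hB0 : 0 ≤ B := by nlinarith
      have hb := Real.sq_sqrt hB0
      have hb0 := Real.sqrt_nonneg B
      have hbR : R ≤ Real.sqrt B := Real.le_sqrt_of_sq_le (by nlinarith)
      have hbq : Real.sqrt B ≤ r * q := by
        apply Real.sqrt_le_iff.2
        refine ⟨by positivity, ?_⟩
        rw [mul_pow, h2]
        nlinarith
      refine le_trans ?_ (add_le_add_left hbq z)
      apply Real.sqrt_le_iff.2
      refine ⟨by positivity, ?_⟩
      nlinarith [mul_le_mul_of_nonneg_left hbR hz0, sq_nonneg z]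
    have hzy : z = y / R + s * d / R := by rw [hz]; ring
    have key : r * q - v + s * d / R ≤ 2 * r * (q - v) := by
      obtain ⟨a, ha⟩ : ∃ a, a = v / q := ⟨_, rfl⟩
      obtain ⟨b, hb⟩ : ∃ b, b = v / R := ⟨_, rfl⟩
      have hva : v = a * q := by rw [ha]; field_simp
      have hvb : v = b * R := by rw [hb]; field_simp
      have ha0 : 0 ≤ a := by rw [ha]; positivity
      have hb0 : 0 ≤ b := by rw [hb]; positivity
      have ha1 : a ≤ 1 := by rw [ha, div_le_one hq]; exact hvq
      have hab : 2 * r * a ≤ b * (1 + a) := by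
        have : q * (2 * r * a) ≤ q * (b * (1 + a)) := by
          calc q * (2 * r * a) = b * (2 * r * R) := by
                linear_combination (2 * r) * (hvb - hva)
            _ ≤ b * (q + v) := mul_le_mul_of_nonneg_left hc.le hb0
            _ = _ := by rw [hva]; ring
        exact le_of_mul_le_mul_left this hq
      have h5 : s * d / R ≤ q * ((1 - a^2 + (1 - b^2)) / 2) := by
        have e1 : 1 - a^2 = (d/q)^2 := by rw [ha]; field_simp; linarith
        have e2 : 1 - b^2 = (s/R)^2 := by rw [hb]; field_simp; linarith
        rw [e1, e2]
        have e3 : s * d / R = q * ((d/q) * (s/R)) := by field_simp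
        rw [e3]
        apply mul_le_mul_of_nonneg_left _ hq.le
        have h10 := sq_nonneg (d/q - s/R)
        have h11 : (d/q - s/R)^2 = (d/q)^2 - 2 * ((d/q) * (s/R)) + (s/R)^2 := by ring
        linarith
      have h6 : r - a + (1 - a^2 + (1 - b^2)) / 2 ≤ 2 * r * (1 - a) := det_aux r a b h2 h2a h2b ha0 hab
      rw [hva] 
      have h12 := mul_le_mul_of_nonneg_left h6 hq.le
      linarith
    rw [hzy] at h3
    linarith

lemma lp_mono {ι : Type*} (S : Finset ι) (a : ι → ℝ) (ha : ∀ i, 0 ≤ a i) (p q : ℝ) (hp : 0 < p) (hpq : p ≤ q) :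
    (∑ i ∈ S, a i ^ q) ^ (1 / q) ≤ (∑ i ∈ S, a i ^ p) ^ (1 / p) := by
  classical
  have hq : 0 < q := hp.trans_le hpq
  induction S using Finset.induction_on with
  | empty => simp [Real.zero_rpow, hp.ne', hq.ne']
  | insert i S hi ih =>
    rw [Finset.sum_insert hi, Finset.sum_insert hi]
    have n1 : 0 ≤ ∑ i ∈ S, a i ^ q := Finset.sum_nonneg fun i _ => Real.rpow_nonneg (ha i) _
    have n2 : 0 ≤ ∑ i ∈ S, a i ^ p := Finset.sum_nonneg fun i _ => Real.rpow_nonneg (ha i) _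
    have h := Real.rpow_add_rpow_le (ha i) (Real.rpow_nonneg n1 (1/q)) hp hpq
    rw [← Real.rpow_mul n1, one_div_mul_cancel hq.ne', Real.rpow_one] at h
    refine h.trans ?_
    have h2 := Real.rpow_le_rpow (Real.rpow_nonneg n1 _) ih hp.le
    rw [← Real.rpow_mul n2, one_div_mul_cancel hp.ne', Real.rpow_one] at h2
    have := ha i
    gcongr

lemma det_vec {E : Type*} [NormedAddCommGroup E] [InnerProductSpace ℝ E] (S d : E) (V : ℝ) (hV : 0 ≤ V) :
    Real.sqrt (‖S + d‖^2 + (V + ‖d‖^2)) ≤ Real.sqrt (‖S‖^2 + V)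
      + inner ℝ ((Real.sqrt (‖S‖^2 + V))⁻¹ • S) d
      + 2 * Real.sqrt 2 * (Real.sqrt (V + ‖d‖^2) - Real.sqrt V) := by
  have hc0 : 0 ≤ Real.sqrt 2 := Real.sqrt_nonneg 2
  by_cases hR : ‖S‖^2 + V = 0
  · have hS : ‖S‖ = 0 := by nlinarith [sq_nonneg ‖S‖]
    have hV0 : V = 0 := by nlinarith [sq_nonneg ‖S‖]
    rw [norm_eq_zero] at hS
    subst hS hV0
    have e : ‖d‖^2 + ‖d‖^2 = 2 * ‖d‖^2 := by ring
    simp [e]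
    nlinarith [mul_nonneg hc0 (norm_nonneg d)]
  by_cases hq : V + ‖d‖^2 = 0
  · have hd : ‖d‖ = 0 := by nlinarith [sq_nonneg ‖d‖]
    have hV0 : V = 0 := by nlinarith [sq_nonneg ‖d‖]
    rw [norm_eq_zero] at hd
    subst hd hV0
    simp
  have hR' : 0 < ‖S‖^2 + V := lt_of_le_of_ne (by positivity) (Ne.symm hR)
  have hq' : 0 < V + ‖d‖^2 := lt_of_le_of_ne (by positivity) (Ne.symm hq)
  have h := det_real (Real.sqrt V) ‖d‖ ‖S‖ (Real.sqrt (‖S‖^2 + V)) (Real.sqrt (V + ‖d‖^2))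
    (inner ℝ S d) (Real.sqrt_nonneg _) (norm_nonneg _) (norm_nonneg _) (Real.sqrt_pos.2 hR')
    (Real.sqrt_pos.2 hq') (by rw [Real.sq_sqrt hR'.le, Real.sq_sqrt hV])
    (by rw [Real.sq_sqrt hq'.le, Real.sq_sqrt hV]) (abs_real_inner_le_norm S d)
  rw [real_inner_smul_left, inv_mul_eq_div]
  have e : ‖S + d‖^2 + (V + ‖d‖^2) = Real.sqrt (‖S‖^2 + V)^2 + 2 * inner ℝ S d + 2 * ‖d‖^2 := by
    rw [Real.sq_sqrt hR'.le, norm_add_sq_real]; ring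
  rw [e]
  exact h

lemma norm_w_le {E : Type*} [NormedAddCommGroup E] [InnerProductSpace ℝ E] (S : E) (V : ℝ) (hV : 0 ≤ V) :
    ‖(Real.sqrt (‖S‖^2 + V))⁻¹ • S‖ ≤ 1 := by
  rw [norm_smul, norm_inv, Real.norm_of_nonneg (Real.sqrt_nonneg _), inv_mul_eq_div]
  apply div_le_one_of_le₀ _ (Real.sqrt_nonneg _)
  apply Real.le_sqrt_of_sq_le
  linarith

lemma meas_V {Ω E : Type*} [NormedAddCommGroup E] [MeasurableSpace E] [BorelSpace E] {m : MeasurableSpace Ω}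
    (d : ℕ → Ω → E) (t : ℕ) (h : ∀ k ∈ Finset.Icc 1 t, Measurable[m] (d k)) :
    Measurable[m] (fun ω => ∑ k ∈ Finset.Icc 1 t, ‖d k ω‖ ^ 2) :=
  Finset.measurable_fun_sum _ fun k hk => ((h k hk).norm).pow_const 2

lemma meas_w {Ω : Type*} {n : ℕ} {m : MeasurableSpace Ω}
    (S : Ω → EuclideanSpace ℝ (Fin n)) (V : Ω → ℝ) (hS : Measurable[m] S) (hV : Measurable[m] V) :
    Measurable[m] (fun ω => (Real.sqrt (‖S ω‖^2 + V ω))⁻¹ • S ω) :=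
  (((hS.norm.pow_const 2).add hV).sqrt.inv).smul hS

/-- Let `{d_t}_{t ≥ 1}` be a sequence of integrable random vectors in `ℝ^d`
forming a martingale difference sequence with respect to its natural filtration
`F_t = σ(d_1, …, d_t)`, i.e. `E[d_t | F_{t-1}] = 0` for all `t ≥ 1` (with `F_0` the trivial
σ-algebra).  Then for any `p ∈ [1, 2]` and every `T ≥ 0`,
`E[‖∑_{t=1}^T d_t‖] ≤ 2√2 · E[(∑_{t=1}^T ‖d_t‖^p)^{1/p}]`. -/
theorem mds_norm_sum_le (dim : ℕ) (Ω : Type*) (mΩ : MeasurableSpace Ω)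
    (μ : Measure Ω) (hμ : IsProbabilityMeasure μ)
    (dseq : ℕ → Ω → EuclideanSpace ℝ (Fin dim))
    (hmeas : ∀ t, Measurable (dseq t))
    (hint : ∀ t, Integrable (dseq t) μ)
    (𝓕 : ℕ → MeasurableSpace Ω)
    (h𝓕 : ∀ t, 𝓕 t = ⨆ k ∈ Finset.Icc 1 t,
      MeasurableSpace.comap (dseq k) (inferInstance : MeasurableSpace (EuclideanSpace ℝ (Fin dim))))
    (hmds : ∀ t, 1 ≤ t → μ[dseq t|𝓕 (t - 1)] =ᵐ[μ] 0)
    (p : ℝ) (hp1 : 1 ≤ p) (hp2 : p ≤ 2) :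
    ∀ T : ℕ,
      ∫ ω, ‖∑ t ∈ Finset.Icc 1 T, dseq t ω‖ ∂μ ≤
        2 * Real.sqrt 2 * ∫ ω, (∑ t ∈ Finset.Icc 1 T, ‖dseq t ω‖ ^ p) ^ (1 / p) ∂μ := by
  intro T
  have h𝓕le : ∀ t, 𝓕 t ≤ mΩ := by
    intro t
    rw [h𝓕]
    exact iSup₂_le fun k _ => (hmeas k).comap_le
  have hdm : ∀ t k, k ∈ Finset.Icc 1 t → Measurable[𝓕 t] (dseq k) := by
    intro t k hk
    rw [measurable_iff_comap_le, h𝓕]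
    exact le_iSup₂ (f := fun k (_ : k ∈ Finset.Icc 1 t) => MeasurableSpace.comap (dseq k)
      (inferInstance : MeasurableSpace (EuclideanSpace ℝ (Fin dim)))) k hk
  set S : ℕ → Ω → EuclideanSpace ℝ (Fin dim) := fun t ω => ∑ k ∈ Finset.Icc 1 t, dseq k ω with hS
  set V : ℕ → Ω → ℝ := fun t ω => ∑ k ∈ Finset.Icc 1 t, ‖dseq k ω‖ ^ 2 with hVdef
  have hV0 : ∀ t ω, 0 ≤ V t ω := fun t ω => Finset.sum_nonneg fun _ _ => by positivity
  have hSm : ∀ t, Measurable[𝓕 t] (S t) := fun t =>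
    Finset.measurable_fun_sum _ fun k hk => hdm t k hk
  have hVm : ∀ t, Measurable[𝓕 t] (V t) := fun t =>
    meas_V dseq t (hdm t)
  set w : ℕ → Ω → EuclideanSpace ℝ (Fin dim) :=
    fun t ω => (Real.sqrt (‖S t ω‖^2 + V t ω))⁻¹ • S t ω with hw
  have hwm : ∀ t, Measurable[𝓕 t] (w t) := fun t =>
    meas_w (S t) (V t) (hSm t) (hVm t)
  have hw1 : ∀ t ω, ‖w t ω‖ ≤ 1 := fun t ω => norm_w_le _ _ (hV0 t ω)
  have hwi : ∀ t, Integrable (fun ω => inner ℝ (w t ω) (dseq (t+1) ω)) μ := by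
    intro t
    refine (hint (t+1)).norm.mono' ?_ (ae_of_all _ fun ω => ?_)
    · exact (((hwm t).mono (h𝓕le t) le_rfl).inner (hmeas (t+1))).aestronglyMeasurable
    · refine (norm_inner_le_norm _ _).trans ?_
      have := hw1 t ω
      exact mul_le_of_le_one_left (norm_nonneg _) this
  have hwz : ∀ t, ∫ ω, inner ℝ (w t ω) (dseq (t+1) ω) ∂μ = 0 := by
    intro t
    have h1 := condExp_bilin_of_stronglyMeasurable_left (m := 𝓕 t) (μ := μ)
      (innerSL ℝ : EuclideanSpace ℝ (Fin dim) →L[ℝ] EuclideanSpace ℝ (Fin dim) →L[ℝ] ℝ)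
      (f := w t) (g := dseq (t+1)) (hwm t).stronglyMeasurable (hwi t) (hint (t+1))
    have h2 := hmds (t+1) (by omega)
    rw [Nat.add_sub_cancel] at h2
    rw [← integral_condExp (h𝓕le t)]
    apply integral_eq_zero_of_ae
    refine Filter.EventuallyEq.trans h1 ?_
    filter_upwards [h2] with ω h
    rw [h]
    simp
  have hpath : ∀ t ω, Real.sqrt (‖S t ω‖^2 + V t ω) ≤
      ∑ k ∈ Finset.range t, inner ℝ (w k ω) (dseq (k+1) ω) + 2 * Real.sqrt 2 * Real.sqrt (V t ω) := by
    intro t ω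
    induction t with
    | zero => simp [hS, hVdef]
    | succ t ih =>
      have h := det_vec (S t ω) (dseq (t+1) ω) (V t ω) (hV0 t ω)
      have e1 : S (t+1) ω = S t ω + dseq (t+1) ω := by
        simp only [hS]; rw [Finset.sum_Icc_succ_top (by omega)]
      have e2 : V (t+1) ω = V t ω + ‖dseq (t+1) ω‖^2 := by
        simp only [hVdef]; rw [Finset.sum_Icc_succ_top (by omega)]
      rw [e1, e2, Finset.sum_range_succ]
      have e3 : w t ω = (Real.sqrt (‖S t ω‖^2 + V t ω))⁻¹ • S t ω := rfl
      rw [← e3] at h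
      linarith
  have hp0 : 0 < p := by linarith
  have hN : ∀ ω, Real.sqrt (V T ω) ≤ (∑ t ∈ Finset.Icc 1 T, ‖dseq t ω‖ ^ p) ^ (1 / p) := by
    intro ω
    have h := lp_mono (Finset.Icc 1 T) (fun t => ‖dseq t ω‖) (fun _ => norm_nonneg _) p 2 hp0 hp2
    rw [Real.sqrt_eq_rpow]
    simpa [hVdef] using h
  have hNi : Integrable (fun ω => (∑ t ∈ Finset.Icc 1 T, ‖dseq t ω‖ ^ p) ^ (1 / p)) μ := by
    refine Integrable.mono' (integrable_finsetSum (Finset.Icc 1 T) fun t _ => (hint t).norm) ?_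
      (ae_of_all _ fun ω => ?_)
    · exact ((Finset.measurable_fun_sum _ fun k _ =>
        ((hmeas k).norm.pow_const p)).pow_const (1/p)).aestronglyMeasurable
    · have h := lp_mono (Finset.Icc 1 T) (fun t => ‖dseq t ω‖) (fun _ => norm_nonneg _) 1 p
        one_pos hp1
      rw [Real.norm_of_nonneg (by positivity)]
      simpa using h
  have hSi : Integrable (fun ω => ∑ k ∈ Finset.range T, inner ℝ (w k ω) (dseq (k+1) ω)) μ :=
    integrable_finsetSum _ fun k _ => hwi k
  have hfin : ∀ ω, ‖∑ t ∈ Finset.Icc 1 T, dseq t ω‖ ≤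
      ∑ k ∈ Finset.range T, inner ℝ (w k ω) (dseq (k+1) ω)
        + 2 * Real.sqrt 2 * (∑ t ∈ Finset.Icc 1 T, ‖dseq t ω‖ ^ p) ^ (1 / p) := by
    intro ω
    have h1 : ‖S T ω‖ ≤ Real.sqrt (‖S T ω‖^2 + V T ω) :=
      Real.le_sqrt_of_sq_le (by linarith [hV0 T ω])
    have h2 := mul_le_mul_of_nonneg_left (hN ω) (by positivity : 0 ≤ 2 * Real.sqrt 2)
    exact h1.trans ((hpath T ω).trans (by linarith))
  calc ∫ ω, ‖∑ t ∈ Finset.Icc 1 T, dseq t ω‖ ∂μ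
      ≤ ∫ ω, (∑ k ∈ Finset.range T, inner ℝ (w k ω) (dseq (k+1) ω)
        + 2 * Real.sqrt 2 * (∑ t ∈ Finset.Icc 1 T, ‖dseq t ω‖ ^ p) ^ (1 / p)) ∂μ :=
        integral_mono (integrable_finsetSum _ fun k _ => hint k).norm
          (hSi.add (hNi.const_mul _)) hfin
    _ = _ := by
      rw [integral_add hSi (hNi.const_mul _), integral_finsetSum _ fun k _ => hwi k,
        integral_const_mul]
      simp [hwz]
end

section
/- Under Assumptions 3–4 and GT-NSGDm with momentum parameter β ∈ (0,1), for all t = 0, …, T the consensus error of the gradient trackers satisfies (1/n) E[Σ_{i=1}^n ‖y_i^t − ȳ^t‖] ≤ 2√2 · n^{1/2} (1/β − 1) (Σ_{k=0}^t λ^{(t−k+1)p})^{1/p} σ + (1/√n)(1/β − 1) Σ_{k=0}^t λ^{t−k+1} E[‖∇F(x^k) − v^k‖]. -/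
open MeasureTheory

set_option maxHeartbeats 4000000

lemma aux_tangent {A h p : ℝ} (hA : 0 < A) (hh : 0 ≤ A ^ 2 + h) (hp1 : 1 < p) (hp2 : p ≤ 2) :
    (A ^ 2 + h) ^ (p / 2) ≤ A ^ p + p / 2 * A ^ (p - 2) * h := by
  have hA2 : 0 < A ^ 2 := by positivity
  have hs : -1 ≤ h / A ^ 2 := by rw [le_div_iff₀ hA2]; linarith
  have e1 : A ^ 2 + h = A ^ 2 * (1 + h / A ^ 2) := by field_simp
  have e2 : (A ^ 2) ^ (p / 2) = A ^ p := by
    rw [← Real.rpow_natCast, ← Real.rpow_mul hA.le]; congr 1; push_cast; ring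
  have e3 : A ^ (p - 2) = A ^ p / A ^ 2 := by
    rw [Real.rpow_sub hA]; norm_num
  have hb := rpow_one_add_le_one_add_mul_self hs (p := p / 2) (by linarith) (by linarith)
  rw [e1, Real.mul_rpow hA2.le (by linarith), e2, e3]
  calc A ^ p * (1 + h / A ^ 2) ^ (p / 2) ≤ A ^ p * (1 + p / 2 * (h / A ^ 2)) := by gcongr
    _ = _ := by field_simp

lemma aux_cross {A B p : ℝ} (hA : 0 ≤ A) (hB : 0 ≤ B) (hp1 : 1 < p) :
    A ^ (p - 2) * A * B ≤ A ^ p + B ^ p := by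
  rcases hA.eq_or_lt with rfl | hA'
  · simp; positivity
  have e : A ^ (p - 2) * A = A ^ (p - 1) := by
    rw [← Real.rpow_add_one hA'.ne']; congr 1; ring
  rw [e]
  have hmul : ∀ C : ℝ, 0 < C → C ^ (p - 1) * C = C ^ p := fun C hC => by
    rw [← Real.rpow_add_one hC.ne']; congr 1; ring
  have := Real.rpow_nonneg hA p
  have := Real.rpow_nonneg hB p
  rcases le_total B A with h | h
  · calc A ^ (p - 1) * B ≤ A ^ (p - 1) * A := by gcongr
      _ = A ^ p := hmul A hA'
      _ ≤ _ := by linarith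
  · calc A ^ (p - 1) * B ≤ B ^ (p - 1) * B := by gcongr
      _ = B ^ p := hmul B (hA'.trans_le h)
      _ ≤ _ := by linarith

lemma aux_pt {H : Type*} [NormedAddCommGroup H] [InnerProductSpace ℝ H] {p : ℝ}
    (hp1 : 1 < p) (hp2 : p ≤ 2) (a b : H) :
    ‖a + b‖ ^ p ≤ ‖a‖ ^ p + p * inner ℝ (‖a‖ ^ (p - 2) • a) b + (1 + p) * ‖b‖ ^ p := by
  have hp0 : p ≠ 0 := by linarith
  rw [real_inner_smul_left]
  have hsq : ‖a + b‖ ^ p = (‖a‖ ^ 2 + 2 * inner ℝ a b + ‖b‖ ^ 2) ^ (p / 2) := by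
    rw [← norm_add_sq_real, ← Real.rpow_natCast, ← Real.rpow_mul (norm_nonneg _)]
    congr 1; push_cast; ring
  have hnn : 0 ≤ ‖a‖ ^ 2 + 2 * inner ℝ a b + ‖b‖ ^ 2 := by
    rw [← norm_add_sq_real]; positivity
  have hin := abs_le.1 (abs_real_inner_le_norm a b)
  rw [hsq]
  generalize inner ℝ a b = c at *
  have hA := norm_nonneg a
  have hB := norm_nonneg b
  generalize ‖a‖ = A at *
  generalize ‖b‖ = B at *
  have hBp : 0 ≤ B ^ p := Real.rpow_nonneg hB p
  have hpow : ∀ C : ℝ, 0 < C → C ^ (p - 2) * C ^ 2 = C ^ p := fun C hC => by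
    rw [← Real.rpow_natCast, ← Real.rpow_add hC]; congr 1; push_cast; ring
  rcases hA.eq_or_lt with rfl | hA'
  · have hc : c = 0 := by nlinarith [hin.1, hin.2]
    subst hc
    have : (B ^ 2) ^ (p / 2) = B ^ p := by
      rw [← Real.rpow_natCast, ← Real.rpow_mul hB]; congr 1; push_cast; ring
    simp [Real.zero_rpow hp0, this]
    nlinarith
  rcases le_or_gt B A with h | h
  · have t := aux_tangent (h := 2 * c + B ^ 2) hA' (by linarith) hp1 hp2
    have : A ^ (p - 2) * B ^ 2 ≤ B ^ p := by
      rcases hB.eq_or_lt with rfl | hB'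
      · simp [Real.zero_rpow hp0]
      · rw [← hpow B hB']
        gcongr ?_ * _
        exact Real.rpow_le_rpow_of_nonpos hB' h (by linarith)
    rw [add_assoc]
    refine t.trans ?_
    nlinarith
  · have hB' : 0 < B := hA'.trans h
    have t := aux_tangent (h := 2 * c + A ^ 2) hB' (by linarith) hp1 hp2
    rw [show A ^ 2 + 2 * c + B ^ 2 = B ^ 2 + (2 * c + A ^ 2) by ring]
    refine t.trans ?_
    have m1 : B ^ (p - 2) ≤ A ^ (p - 2) := Real.rpow_le_rpow_of_nonpos hA' h.le (by linarith)
    have m2 : A ^ (p - 2) * A * B ≤ B ^ p := by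
      calc A ^ (p - 2) * A * B = A ^ (p - 1) * B := by
            rw [← Real.rpow_add_one hA'.ne']; congr 2; ring
        _ ≤ B ^ (p - 1) * B := by gcongr
        _ = B ^ p := by rw [← Real.rpow_add_one hB'.ne']; congr 1; ring
    have m3 : (A ^ (p - 2) - B ^ (p - 2)) * (-c) ≤ (A ^ (p - 2) - B ^ (p - 2)) * (A * B) :=
      mul_le_mul_of_nonneg_left (by linarith) (by linarith)
    have m4 : B ^ (p - 2) * A ^ 2 ≤ B ^ (p - 2) * (A * B) := by
      gcongr; nlinarith
    have m5 : 0 ≤ B ^ (p - 2) * (A * B) := by positivity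
    have m6 : 0 ≤ A ^ p := by positivity
    have key : B ^ (p-2) * c + (1/2) * (B ^ (p-2) * A ^ 2) ≤ A ^ (p-2) * c + B ^ p := by
      nlinarith
    nlinarith [mul_le_mul_of_nonneg_left key (by linarith : 0 ≤ p)]

lemma aux_vbe {H Ω : Type*} [NormedAddCommGroup H] [InnerProductSpace ℝ H]
    [CompleteSpace H] {mΩ : MeasurableSpace Ω}
    {μ : Measure Ω} [IsProbabilityMeasure μ] (𝓕 : Filtration ℕ mΩ) {p : ℝ}
    (hp1 : 1 < p) (hp2 : p ≤ 2) (X : ℕ → Ω → H)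
    (hm : ∀ k, StronglyMeasurable[𝓕 (k + 1)] (X k))
    (hi : ∀ k, Integrable (X k) μ) (hz : ∀ k, μ[X k|𝓕 k] =ᵐ[μ] 0)
    (hpi : ∀ k, Integrable (fun ω => ‖X k ω‖ ^ p) μ) (m : ℕ) :
    Integrable (fun ω => ‖∑ k ∈ Finset.range m, X k ω‖ ^ p) μ ∧
    ∫ ω, ‖∑ k ∈ Finset.range m, X k ω‖ ^ p ∂μ ≤
      (1 + p) * ∑ k ∈ Finset.range m, ∫ ω, ‖X k ω‖ ^ p ∂μ := by
  have hp0 : p ≠ 0 := by linarith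
  have hS : ∀ m, StronglyMeasurable[𝓕 m] (fun ω => ∑ k ∈ Finset.range m, X k ω) := by
    intro m
    refine Finset.stronglyMeasurable_fun_sum _ fun k hk => (hm k).mono (𝓕.mono ?_)
    simpa using hk
  induction m with
  | zero => simp [Real.zero_rpow hp0]
  | succ m ih =>
    obtain ⟨ih1, ih2⟩ := ih
    have hSm := hS m
    have hS1 := (hS (m + 1)).mono (𝓕.le (m + 1))
    simp only [Finset.sum_range_succ] at hS1 ⊢
    set S : Ω → H := fun ω => ∑ k ∈ Finset.range m, X k ω with hSdef
    have hD : StronglyMeasurable[𝓕 m] (fun ω => ‖S ω‖ ^ (p - 2) • S ω) := by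
      refine StronglyMeasurable.smul ?_ hSm
      exact (hSm.norm.measurable.pow_const _).stronglyMeasurable
    have hcm : AEStronglyMeasurable (fun ω => inner ℝ (‖S ω‖ ^ (p - 2) • S ω) (X m ω)) μ :=
      (hD.mono (𝓕.le m)).aestronglyMeasurable.inner (hi m).aestronglyMeasurable
    have hci : Integrable (fun ω => inner ℝ (‖S ω‖ ^ (p - 2) • S ω) (X m ω)) μ := by
      refine (ih1.add (hpi m)).mono' hcm (ae_of_all _ fun ω => ?_)
      refine (norm_inner_le_norm _ _).trans ?_
      rw [norm_smul, Real.norm_of_nonneg (by positivity)]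
      exact aux_cross (norm_nonneg _) (norm_nonneg _) hp1
    have hc0 : ∫ ω, inner ℝ (‖S ω‖ ^ (p - 2) • S ω) (X m ω) ∂μ = 0 := by
      have h := condExp_bilin_of_stronglyMeasurable_left (innerSL ℝ) hD hci (hi m)
      rw [← integral_condExp (𝓕.le m)]
      refine integral_eq_zero_of_ae ?_
      filter_upwards [h, hz m] with ω h1 h2
      refine h1.trans ?_
      rw [h2]; simp
    have hb : Integrable (fun ω => ‖S ω‖ ^ p + p * inner ℝ (‖S ω‖ ^ (p - 2) • S ω) (X m ω)
        + (1 + p) * ‖X m ω‖ ^ p) μ := (ih1.add (hci.const_mul p)).add ((hpi m).const_mul _)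
    have hpt : ∀ ω, ‖S ω + X m ω‖ ^ p ≤ _ := fun ω => aux_pt hp1 hp2 (S ω) (X m ω)
    have hI : Integrable (fun ω => ‖S ω + X m ω‖ ^ p) μ := by
      refine hb.mono' ?_ (ae_of_all _ fun ω => ?_)
      · exact (hS1.norm.measurable.pow_const _).aestronglyMeasurable
      · rw [Real.norm_of_nonneg (by positivity)]; exact hpt ω
    refine ⟨hI, (integral_mono hI hb hpt).trans ?_⟩
    have ih1' : Integrable (fun ω => ‖S ω‖ ^ p) μ := ih1
    have hab : Integrable (fun ω => ‖S ω‖ ^ p +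
        p * inner ℝ (‖S ω‖ ^ (p - 2) • S ω) (X m ω)) μ := ih1'.add (hci.const_mul p)
    rw [integral_add hab ((hpi m).const_mul _),
      integral_add ih1' (hci.const_mul p), integral_const_mul, integral_const_mul, hc0]
    linarith

lemma aux_sum_rpow {ι : Type*} (s : Finset ι) (a : ι → ℝ) (ha : ∀ i, 0 ≤ a i) {q : ℝ}
    (hq : 0 < q) (hq1 : q ≤ 1) : (∑ i ∈ s, a i) ^ q ≤ ∑ i ∈ s, a i ^ q := by
  classical
  induction s using Finset.induction_on with
  | empty => simp [Real.zero_rpow hq.ne']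
  | insert i s hi ih =>
    rw [Finset.sum_insert hi, Finset.sum_insert hi]
    refine (Real.rpow_add_le_add_rpow (ha i) (Finset.sum_nonneg fun j _ => ha j) hq.le hq1).trans ?_
    gcongr

lemma aux_meas {d n : ℕ} {Ω : Type*} {m : MeasurableSpace Ω}
    (F : Fin n → Ω → EuclideanSpace ℝ (Fin d)) (hF : ∀ i, StronglyMeasurable (F i)) :
    StronglyMeasurable (fun ω => (WithLp.toLp 2 fun i => F i ω :
      PiLp 2 (fun _ : Fin n => EuclideanSpace ℝ (Fin d)))) := by
  refine (PiLp.continuous_toLp 2 _).comp_stronglyMeasurable ?_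
  refine Measurable.stronglyMeasurable ?_
  exact measurable_pi_iff.2 fun i => (hF i).measurable

lemma aux_T {d n : ℕ} (Q : Matrix (Fin n) (Fin n) ℝ) (lam : ℝ)
    (hlam : lam = ‖Matrix.toEuclideanCLM (𝕜 := ℝ) (n := Fin n) Q‖) :
    ∃ T : PiLp 2 (fun _ : Fin n => EuclideanSpace ℝ (Fin d)) →L[ℝ]
        PiLp 2 (fun _ : Fin n => EuclideanSpace ℝ (Fin d)),
      (∀ z i, T z i = ∑ r, Q i r • z r) ∧ ∀ z, ‖T z‖ ≤ lam * ‖z‖ := by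
  let T0 : PiLp 2 (fun _ : Fin n => EuclideanSpace ℝ (Fin d)) →ₗ[ℝ]
        PiLp 2 (fun _ : Fin n => EuclideanSpace ℝ (Fin d)) :=
    { toFun := fun z => WithLp.toLp 2 fun i => ∑ r, Q i r • z r
      map_add' := fun a b => by ext i j; simp [Finset.sum_add_distrib]
      map_smul' := fun c a => by
        ext i j; simp [Finset.mul_sum]; exact Finset.sum_congr rfl fun _ _ => by ring }
  have hl : 0 ≤ lam := hlam ▸ norm_nonneg _
  have hb : ∀ z, ‖T0 z‖ ≤ lam * ‖z‖ := by
    intro z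
    refine le_of_sq_le_sq ?_ (by positivity)
    rw [mul_pow, PiLp.norm_sq_eq_of_L2, PiLp.norm_sq_eq_of_L2]
    simp only [EuclideanSpace.norm_sq_eq]
    rw [Finset.sum_comm, Finset.sum_comm (f := fun i j => ‖(z.ofLp i).ofLp j‖ ^ 2), Finset.mul_sum]
    refine Finset.sum_le_sum fun c _ => ?_
    let zc : EuclideanSpace ℝ (Fin n) := WithLp.toLp 2 fun r => z r c
    have h := (Matrix.toEuclideanCLM (𝕜 := ℝ) (n := Fin n) Q).le_opNorm zc
    rw [← hlam] at h
    have h2 := pow_le_pow_left₀ (norm_nonneg _) h 2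
    rw [mul_pow, EuclideanSpace.norm_sq_eq, EuclideanSpace.norm_sq_eq] at h2
    refine le_trans (le_of_eq ?_) h2
    refine Finset.sum_congr rfl fun i _ => ?_
    simp [T0, zc, Matrix.mulVec, dotProduct]
  exact ⟨T0.mkContinuous lam hb, fun z i => rfl, hb⟩

/-- (Consensus errors of the gradient trackers.)  Under Assumptions 3–4
and GT-NSGDm with momentum parameter `β ∈ (0,1)`, for every `t` the consensus error of the
gradient trackers satisfies
`(1/n) E[∑ i, ‖y_i^t - ȳ^t‖] ≤ 2√2 n^{1/2} (1/β - 1) (∑_{k=0}^t λ^{(t-k+1)p})^{1/p} σ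
  + (1/√n)(1/β - 1) ∑_{k=0}^t λ^{t-k+1} E[‖∇F(x^k) - v^k‖]`,
where `ȳ^t = (1/n) ∑ i, y_i^t` and `‖∇F(x^k) - v^k‖ = (∑ i, ‖∇f_i(x_i^k) - v_i^k‖²)^{1/2}`
is the norm of the stacked vector in `ℝ^{nd}`.

The heavy-tailed noise Assumption 3 is formalized via a filtration `𝓕`: the iterates are
adapted, the stochastic gradients `g_i^t` are `𝓕 (t+1)`-measurable and integrable,
conditionally unbiased given `𝓕 t`, and have conditional `p`-th moment bounded by `σ^p`. -/
theorem tracker_consensus_error (d n : ℕ) (hn : 0 < n)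
    (Ω : Type*) (mΩ : MeasurableSpace Ω) (μ : Measure Ω) (hμ : IsProbabilityMeasure μ)
    (f : Fin n → EuclideanSpace ℝ (Fin d) → ℝ)
    (gradf : Fin n → EuclideanSpace ℝ (Fin d) → EuclideanSpace ℝ (Fin d))
    (hgrad : ∀ i z, HasGradientAt (f i) (gradf i z) z)
    (p σ : ℝ) (hp1 : 1 < p) (hp2 : p ≤ 2) (hσ : 0 ≤ σ)
    (W : Matrix (Fin n) (Fin n) ℝ)
    (hWnonneg : ∀ i r, 0 ≤ W i r)
    (hWprim : ∃ k : ℕ, 0 < k ∧ ∀ i r, (0 : ℝ) < (W ^ k : Matrix (Fin n) (Fin n) ℝ) i r)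
    (hWrow : ∀ i, ∑ r, W i r = 1) (hWcol : ∀ r, ∑ i, W i r = 1)
    (lam : ℝ)
    (hlam : lam = ‖Matrix.toEuclideanCLM (𝕜 := ℝ) (n := Fin n)
      (W - (n : ℝ)⁻¹ • Matrix.of (fun _ _ => (1 : ℝ)))‖)
    (hlam1 : lam < 1)
    (𝓕 : Filtration ℕ mΩ)
    (α β : ℝ) (hα : 0 < α) (hβ : β ∈ Set.Ioo (0 : ℝ) 1)
    (xbar0 : EuclideanSpace ℝ (Fin d))
    (x v y g : ℕ → Fin n → Ω → EuclideanSpace ℝ (Fin d))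
    (hx0 : ∀ i ω, x 0 i ω = xbar0)
    (hv0 : ∀ i ω, v 0 i ω = (1 - β) • g 0 i ω)
    (hvrec : ∀ t i ω, v (t + 1) i ω = β • v t i ω + (1 - β) • g (t + 1) i ω)
    (hy0 : ∀ i ω, y 0 i ω = ∑ r, W i r • v 0 r ω)
    (hyrec : ∀ t i ω, y (t + 1) i ω = ∑ r, W i r • (y t r ω + v (t + 1) r ω - v t r ω))
    (hxrec : ∀ t i ω, x (t + 1) i ω = ∑ r, W i r • (x t r ω - (α / ‖y t r ω‖) • y t r ω))
    (hadapt : ∀ i, Adapted 𝓕 fun t => x t i)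
    (hgmeas : ∀ t i, StronglyMeasurable[𝓕 (t + 1)] (g t i))
    (hgint : ∀ t i, Integrable (g t i) μ)
    (hunbiased : ∀ t i, μ[g t i|𝓕 t] =ᵐ[μ] fun ω => gradf i (x t i ω))
    (hmomint : ∀ t i, Integrable (fun ω => ‖g t i ω - gradf i (x t i ω)‖ ^ p) μ)
    (hmoment : ∀ t i, ∀ᵐ ω ∂μ,
      (μ[fun ω' => ‖g t i ω' - gradf i (x t i ω')‖ ^ p|𝓕 t]) ω ≤ σ ^ p) :
    ∀ t : ℕ,
      (n : ℝ)⁻¹ * ∫ ω, (∑ i, ‖y t i ω - (n : ℝ)⁻¹ • ∑ j, y t j ω‖) ∂μ ≤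
        2 * Real.sqrt 2 * Real.sqrt n * (1 / β - 1) *
          (∑ k ∈ Finset.range (t + 1), (lam ^ (t - k + 1)) ^ p) ^ (1 / p) * σ +
        (Real.sqrt n)⁻¹ * (1 / β - 1) *
          ∑ k ∈ Finset.range (t + 1), lam ^ (t - k + 1) *
            ∫ ω, Real.sqrt (∑ i, ‖gradf i (x k i ω) - v k i ω‖ ^ 2) ∂μ := by
  intro t
  classical
  obtain ⟨hβ0, hβ1⟩ := hβ
  set Q : Matrix (Fin n) (Fin n) ℝ := W - (n : ℝ)⁻¹ • Matrix.of (fun _ _ => (1 : ℝ)) with hQ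
  have hn' : (0 : ℝ) < n := by exact_mod_cast hn
  have hl0 : 0 ≤ lam := hlam ▸ norm_nonneg _
  have hQe : ∀ i r, Q i r = W i r - (n : ℝ)⁻¹ := fun i r => by simp [hQ]
  obtain ⟨T, hT, hTn⟩ := aux_T (d := d) Q lam hlam
  set c : ℝ := 1 / β - 1 with hc
  have hc0 : 0 ≤ c := by
    rw [hc, sub_nonneg, le_div_iff₀ hβ0]; linarith
  have hTpow : ∀ (m : ℕ) z, ‖(T ^ m) z‖ ≤ lam ^ m * ‖z‖ := by
    intro m
    induction m with
    | zero => intro z; simp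
    | succ m ih =>
      intro z
      rw [pow_succ', pow_succ', mul_assoc]
      exact (hTn _).trans (mul_le_mul_of_nonneg_left (ih z) hl0)
  -- stacked objects
  let N : ℕ → Ω → PiLp 2 (fun _ : Fin n => EuclideanSpace ℝ (Fin d)) :=
    fun k ω => WithLp.toLp 2 fun i => g k i ω - gradf i (x k i ω)
  let R : ℕ → Ω → PiLp 2 (fun _ : Fin n => EuclideanSpace ℝ (Fin d)) :=
    fun k ω => WithLp.toLp 2 fun i => gradf i (x k i ω) - v k i ω
  let V : ℕ → Ω → PiLp 2 (fun _ : Fin n => EuclideanSpace ℝ (Fin d)) :=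
    fun k ω => WithLp.toLp 2 fun i => v k i ω
  let e : ℕ → Ω → PiLp 2 (fun _ : Fin n => EuclideanSpace ℝ (Fin d)) :=
    fun k ω => WithLp.toLp 2 fun i => y k i ω - (n : ℝ)⁻¹ • ∑ j, y k j ω
  have hmean : ∀ (w : Fin n → EuclideanSpace ℝ (Fin d)) (i : Fin n),
      (∑ r, W i r • w r) - (n : ℝ)⁻¹ • ∑ j, ∑ r, W j r • w r = ∑ r, Q i r • w r := by
    intro w i
    rw [Finset.sum_comm]
    simp only [← Finset.sum_smul, hWcol, one_smul, hQe, sub_smul, Finset.sum_sub_distrib,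
      Finset.smul_sum]
  have hQrow : ∀ i, ∑ r, Q i r = 0 := by
    intro i
    simp only [hQe, Finset.sum_sub_distrib, hWrow]
    simp [hn'.ne']
  have he0 : ∀ ω, e 0 ω = T (V 0 ω) := by
    intro ω
    apply PiLp.ext
    intro i
    rw [hT]
    simp only [e, V, hy0]
    exact hmean _ i
  have hes : ∀ k ω, e (k + 1) ω = T (e k ω + (V (k + 1) ω - V k ω)) := by
    intro k ω
    apply PiLp.ext
    intro i
    rw [hT]
    simp only [e, V, hyrec]
    rw [hmean (fun r => y k r ω + v (k + 1) r ω - v k r ω) i]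
    have h0 : ∑ r, Q i r • ((n : ℝ)⁻¹ • ∑ j, y k j ω) = 0 := by
      rw [← Finset.sum_smul, hQrow, zero_smul]
    rw [← sub_zero (∑ r, Q i r • (y k r ω + v (k + 1) r ω - v k r ω)), ← h0,
      ← Finset.sum_sub_distrib]
    refine Finset.sum_congr rfl fun r _ => ?_
    rw [← smul_sub]
    congr 1
    simp only [PiLp.add_apply, PiLp.sub_apply]
    abel
  have hV0 : ∀ ω, V 0 ω = c • (N 0 ω + R 0 ω) := by
    intro ω
    apply PiLp.ext
    intro i
    simp only [V, N, R, PiLp.add_apply, PiLp.smul_apply, sub_add_sub_cancel, hv0, hc]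
    rw [← sub_eq_zero]
    match_scalars
    field_simp
    ring
  have hVs : ∀ k ω, V (k + 1) ω - V k ω = c • (N (k + 1) ω + R (k + 1) ω) := by
    intro k ω
    apply PiLp.ext
    intro i
    simp only [V, N, R, PiLp.add_apply, PiLp.sub_apply, PiLp.smul_apply, sub_add_sub_cancel,
      hvrec, hc]
    rw [← sub_eq_zero]
    match_scalars <;> field_simp <;> ring
  have hesum : ∀ t ω, e t ω =
      c • ∑ k ∈ Finset.range (t + 1), (T ^ (t - k + 1)) (N k ω + R k ω) := by
    intro t ω
    induction t with
    | zero => simp [he0, hV0]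
    | succ t ih =>
      rw [hes, ih, hVs, Finset.sum_range_succ _ (t + 1), map_add, map_smul, map_smul, smul_add,
        map_sum]
      congr 2
      · refine Finset.sum_congr rfl fun k hk => ?_
        have : t + 1 - k = t - k + 1 := by simp at hk; omega
        rw [this, pow_succ' T (t - k + 1)]
        rfl
      · simp
  -- measurability and integrability
  have hgm : ∀ i, Measurable (gradf i) := by
    intro i
    have h1 : gradf i = fun z => (InnerProductSpace.toDual ℝ _).symm (fderiv ℝ (f i) z) := by
      funext z
      rw [(hgrad i z).hasFDerivAt.fderiv]
      simp
    rw [h1]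
    exact (LinearIsometryEquiv.continuous _).measurable.comp (measurable_fderiv ℝ (f i))
  have hGint : ∀ k i, Integrable (fun ω => gradf i (x k i ω)) μ := fun k i =>
    integrable_condExp.congr (hunbiased k i)
  have hGm : ∀ k i, Measurable[𝓕 k] (fun ω => gradf i (x k i ω)) := fun k i =>
    (hgm i).comp (hadapt i k)
  have hNm : ∀ k, StronglyMeasurable[𝓕 (k + 1)] (N k) := by
    intro k
    refine aux_meas (m := 𝓕 (k + 1)) _ fun i => ?_
    exact (hgmeas k i).sub
      ((hGm k i).mono (𝓕.mono (Nat.le_succ k)) le_rfl).stronglyMeasurable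
  have hNi : ∀ k, Integrable (N k) μ := fun k =>
    Integrable.of_eval_piLp fun i => (hgint k i).sub (hGint k i)
  have hvint : ∀ k i, Integrable (v k i) μ := by
    intro k i
    induction k with
    | zero => rw [show v 0 i = (1 - β) • g 0 i from funext (hv0 i)]
              exact (hgint 0 i).smul _
    | succ k ih =>
      rw [show v (k + 1) i = β • v k i + (1 - β) • g (k + 1) i from
        funext (hvrec k i)]
      exact (ih.smul _).add ((hgint (k + 1) i).smul _)
  have hRi : ∀ k, Integrable (R k) μ := fun k =>
    Integrable.of_eval_piLp fun i => (hGint k i).sub (hvint k i)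
  have hNz : ∀ k, μ[N k|𝓕 k] =ᵐ[μ] 0 := by
    intro k
    have h1 : ∀ i : Fin n, ∀ᵐ ω ∂μ, (μ[N k|𝓕 k]) ω i = 0 := by
      intro i
      have a1 := (PiLp.proj 2 (𝕜 := ℝ) (fun _ : Fin n => EuclideanSpace ℝ (Fin d)) i).comp_condExp_comm
        (m := 𝓕 k) (hNi k)
      have a2 := condExp_sub (hgint k i) (hGint k i) (𝓕 k)
      have a3 : μ[fun ω => gradf i (x k i ω)|𝓕 k] = fun ω => gradf i (x k i ω) :=
        condExp_of_stronglyMeasurable (𝓕.le k) (hGm k i).stronglyMeasurable (hGint k i)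
      filter_upwards [a1, a2, hunbiased k i] with ω b1 b2 b3
      refine b1.trans (b2.trans ?_)
      rw [Pi.sub_apply, b3, a3]
      simp
    filter_upwards [ae_all_iff.2 h1] with ω hω
    apply PiLp.ext
    intro i
    simpa using hω i
  have hNpt : ∀ k ω, ‖N k ω‖ ^ p ≤ ∑ i, ‖g k i ω - gradf i (x k i ω)‖ ^ p := by
    intro k ω
    have h1 : ‖N k ω‖ ^ p = (∑ i, ‖g k i ω - gradf i (x k i ω)‖ ^ 2) ^ (p / 2) := by
      have : ‖N k ω‖ ^ 2 = ∑ i, ‖g k i ω - gradf i (x k i ω)‖ ^ 2 := PiLp.norm_sq_eq_of_L2 _ _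
      rw [← this, ← Real.rpow_natCast, ← Real.rpow_mul (norm_nonneg _)]
      congr 1; push_cast; ring
    rw [h1]
    refine (aux_sum_rpow _ _ (fun i => by positivity) (by linarith) (by linarith)).trans
      (le_of_eq ?_)
    refine Finset.sum_congr rfl fun i _ => ?_
    rw [← Real.rpow_natCast, ← Real.rpow_mul (norm_nonneg _)]
    congr 1; push_cast; ring
  have hsumint : ∀ k, Integrable (fun ω => ∑ i, ‖g k i ω - gradf i (x k i ω)‖ ^ p) μ := fun k =>
    integrable_finsetSum _ fun i _ => hmomint k i
  have hNpi : ∀ k, Integrable (fun ω => ‖N k ω‖ ^ p) μ := by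
    intro k
    refine (hsumint k).mono' ?_ (ae_of_all _ fun ω => ?_)
    · exact (((hNm k).mono (𝓕.le _)).norm.measurable.pow_const _).aestronglyMeasurable
    · rw [Real.norm_of_nonneg (by positivity)]; exact hNpt k ω
  have hNb : ∀ k, ∫ ω, ‖N k ω‖ ^ p ∂μ ≤ n * σ ^ p := by
    intro k
    refine (integral_mono (hNpi k) (hsumint k) (hNpt k)).trans ?_
    rw [integral_finsetSum _ fun i _ => hmomint k i]
    have : ∀ i : Fin n, ∫ ω, ‖g k i ω - gradf i (x k i ω)‖ ^ p ∂μ ≤ σ ^ p := by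
      intro i
      rw [← integral_condExp (𝓕.le k)]
      refine (integral_mono_ae integrable_condExp (integrable_const _) (hmoment k i)).trans ?_
      simp
    refine (Finset.sum_le_sum fun i _ => this i).trans ?_
    simp
  -- the martingale part
  let X : ℕ → Ω → PiLp 2 (fun _ : Fin n => EuclideanSpace ℝ (Fin d)) :=
    fun k ω => (T ^ (t - k + 1)) (N k ω)
  have hXm : ∀ k, StronglyMeasurable[𝓕 (k + 1)] (X k) := fun k =>
    (T ^ (t - k + 1)).continuous.comp_stronglyMeasurable (hNm k)
  have hXi : ∀ k, Integrable (X k) μ := fun k => (T ^ (t - k + 1)).integrable_comp (hNi k)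
  have hXz : ∀ k, μ[X k|𝓕 k] =ᵐ[μ] 0 := by
    intro k
    have a1 := (T ^ (t - k + 1)).comp_condExp_comm (m := 𝓕 k) (hNi k)
    filter_upwards [a1, hNz k] with ω b1 b2
    refine b1.symm.trans ?_
    rw [Function.comp_apply, b2]
    simp
  have hXpt : ∀ k ω, ‖X k ω‖ ^ p ≤ (lam ^ (t - k + 1)) ^ p * ‖N k ω‖ ^ p := by
    intro k ω
    rw [← Real.mul_rpow (by positivity) (norm_nonneg _)]
    exact Real.rpow_le_rpow (norm_nonneg _) (hTpow _ _) (by linarith)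
  have hXpi : ∀ k, Integrable (fun ω => ‖X k ω‖ ^ p) μ := by
    intro k
    refine ((hNpi k).const_mul ((lam ^ (t - k + 1)) ^ p)).mono' ?_ (ae_of_all _ fun ω => ?_)
    · exact (((hXm k).mono (𝓕.le _)).norm.measurable.pow_const _).aestronglyMeasurable
    · rw [Real.norm_of_nonneg (by positivity)]; exact hXpt k ω
  have hXb : ∀ k, ∫ ω, ‖X k ω‖ ^ p ∂μ ≤ (lam ^ (t - k + 1)) ^ p * (n * σ ^ p) := by
    intro k
    refine (integral_mono (hXpi k) ((hNpi k).const_mul _) (hXpt k)).trans ?_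
    rw [integral_const_mul]
    exact mul_le_mul_of_nonneg_left (hNb k) (by positivity)
  obtain ⟨hSi, hSb⟩ := aux_vbe 𝓕 hp1 hp2 X hXm hXi hXz hXpi (t + 1)
  set L : ℝ := ∑ k ∈ Finset.range (t + 1), (lam ^ (t - k + 1)) ^ p with hL
  have hL0 : 0 ≤ L := Finset.sum_nonneg fun k _ => by positivity
  have hSint : Integrable (fun ω => ‖∑ k ∈ Finset.range (t + 1), X k ω‖) μ :=
    (integrable_finsetSum _ fun k _ => hXi k).norm
  have hmart : ∫ ω, ‖∑ k ∈ Finset.range (t + 1), X k ω‖ ∂μ ≤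
      2 * Real.sqrt 2 * n * L ^ (1 / p) * σ := by
    have hp0 : 0 < p := by linarith
    refine (Real.rpow_le_rpow_iff (integral_nonneg fun ω => norm_nonneg _) (by positivity) hp0).1 ?_
    have j := (convexOn_rpow hp1.le).map_integral_le (μ := μ)
      (f := fun ω => ‖∑ k ∈ Finset.range (t + 1), X k ω‖)
      (Real.continuous_rpow_const hp0.le).continuousOn isClosed_Ici
      (ae_of_all _ fun ω => norm_nonneg _) hSint hSi
    refine j.trans (hSb.trans ?_)
    have b1 : ∑ k ∈ Finset.range (t + 1), ∫ ω, ‖X k ω‖ ^ p ∂μ ≤ L * (n * σ ^ p) := by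
      rw [hL, Finset.sum_mul]
      exact Finset.sum_le_sum fun k _ => hXb k
    rw [Real.mul_rpow (by positivity) hσ, Real.mul_rpow (by positivity) (by positivity),
      Real.mul_rpow (by positivity) hn'.le, ← Real.rpow_mul hL0, one_div_mul_cancel hp0.ne',
      Real.rpow_one]
    have b2 : 1 + p ≤ (2 * Real.sqrt 2) ^ p := by
      have s2 : 1 ≤ Real.sqrt 2 := by rw [Real.one_le_sqrt]; norm_num
      have := one_add_mul_self_le_rpow_one_add (s := 1) (by norm_num) hp1.le
      calc 1 + p = 1 + p * 1 := by ring
        _ ≤ (1 + 1) ^ p := this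
        _ ≤ _ := Real.rpow_le_rpow (by norm_num) (by linarith) hp0.le
    have b3 : (n : ℝ) ≤ (n : ℝ) ^ p := by
      have h1 : (1 : ℝ) ≤ n := by exact_mod_cast hn
      simpa using Real.rpow_le_rpow_of_exponent_le h1 hp1.le
    calc (1 + p) * ∑ k ∈ Finset.range (t + 1), ∫ ω, ‖X k ω‖ ^ p ∂μ
        ≤ (1 + p) * (L * (n * σ ^ p)) := by gcongr
      _ = (1 + p) * n * L * σ ^ p := by ring
      _ ≤ (2 * Real.sqrt 2) ^ p * (n : ℝ) ^ p * L * σ ^ p := by gcongr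
  -- pathwise bound
  have hR : ∀ k ω, Real.sqrt (∑ i, ‖gradf i (x k i ω) - v k i ω‖ ^ 2) = ‖R k ω‖ := fun k ω =>
    (PiLp.norm_eq_of_L2 (R k ω)).symm
  simp only [hR]
  have hpath : ∀ ω, ∑ i, ‖y t i ω - (n : ℝ)⁻¹ • ∑ j, y t j ω‖ ≤
      Real.sqrt n * (c * (‖∑ k ∈ Finset.range (t + 1), X k ω‖ +
        ∑ k ∈ Finset.range (t + 1), lam ^ (t - k + 1) * ‖R k ω‖)) := by
    intro ω
    have h1 : ∑ i, ‖y t i ω - (n : ℝ)⁻¹ • ∑ j, y t j ω‖ ≤ Real.sqrt n * ‖e t ω‖ := by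
      refine le_of_sq_le_sq ?_ (by positivity)
      rw [mul_pow, Real.sq_sqrt hn'.le, PiLp.norm_sq_eq_of_L2]
      refine sq_sum_le_card_mul_sum_sq.trans ?_
      simp [e]
    refine h1.trans ?_
    gcongr
    rw [hesum, norm_smul, Real.norm_of_nonneg hc0]
    gcongr
    simp only [map_add, Finset.sum_add_distrib]
    refine (norm_add_le _ _).trans ?_
    gcongr
    refine (norm_sum_le _ _).trans ?_
    exact Finset.sum_le_sum fun k _ => hTpow _ _
  have hRs : Integrable (fun ω => ∑ k ∈ Finset.range (t + 1), lam ^ (t - k + 1) * ‖R k ω‖) μ :=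
    integrable_finsetSum _ fun k _ => (hRi k).norm.const_mul _
  have hfin : ∫ ω, (∑ i, ‖y t i ω - (n : ℝ)⁻¹ • ∑ j, y t j ω‖) ∂μ ≤
      Real.sqrt n * (c * (2 * Real.sqrt 2 * n * L ^ (1 / p) * σ +
        ∑ k ∈ Finset.range (t + 1), lam ^ (t - k + 1) * ∫ ω, ‖R k ω‖ ∂μ)) := by
    refine (integral_mono_of_nonneg (ae_of_all _ fun ω => by positivity)
      (((hSint.add hRs).const_mul c).const_mul _) (ae_of_all _ hpath)).trans ?_
    rw [integral_const_mul, integral_const_mul, integral_add' hSint hRs,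
      integral_finsetSum _ fun k _ => (hRi k).norm.const_mul _]
    simp only [integral_const_mul]
    gcongr
  refine (mul_le_mul_of_nonneg_left hfin (by positivity)).trans (le_of_eq ?_)
  have hs : Real.sqrt n * Real.sqrt n = n := Real.mul_self_sqrt hn'.le
  have hs0 : 0 < Real.sqrt n := Real.sqrt_pos.2 hn'
  generalize ∑ k ∈ Finset.range (t + 1), lam ^ (t - k + 1) * ∫ ω, ‖R k ω‖ ∂μ = Z
  generalize Real.sqrt n = s at hs hs0 ⊢
  rw [← hs]
  field_simp
end

section
/- Under Assumptions 2–4 and GT-NSGDm, for all t = 0, …, T the stacked gradient estimation error satisfies E[‖v^t − ∇F(x^t)‖] ≤ β^{t+1} ‖∇F(1_n ⊗ x̄⁰)‖ + 2√2 (Σ_{k=0}^t β^{(t−k)p}(1−β)^p)^{1/p} n σ + n Σ_{k=0}^t β^{t−k+1} (2αλ/(1−λ) + α) L. -/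
open MeasureTheory

lemma aux_conc {m u q : ℝ} (hm : 0 < m) (hu : 0 ≤ u) (hq0 : 0 ≤ q) (hq1 : q ≤ 1) :
    u ^ q ≤ m ^ q + q * (m ^ (q - 1) * (u - m)) := by
  have h := rpow_one_add_le_one_add_mul_self (s := u / m - 1)
    (by have := div_nonneg hu hm.le; linarith) hq0 hq1
  have e : 1 + (u / m - 1) = u / m := by ring
  rw [e, Real.div_rpow hu hm.le, div_le_iff₀ (Real.rpow_pos_of_pos hm q)] at h
  refine h.trans (le_of_eq ?_)
  rw [Real.rpow_sub_one hm.ne']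
  field_simp

lemma aux_sq {m p : ℝ} (hm : 0 < m) : m ^ p = m ^ (p - 2) * m ^ 2 := by
  rw [← Real.rpow_natCast, ← Real.rpow_add hm]; norm_num

lemma aux_one {m p : ℝ} (hm : 0 < m) : m ^ (p - 1) = m ^ (p - 2) * m := by
  have := Real.rpow_add hm (p - 2) 1
  rw [Real.rpow_one] at this
  rw [← this]; ring_nf

lemma aux_conc2 {m u p : ℝ} (hm : 0 < m) (hu : 0 ≤ u) (hp1 : 1 < p) (hp2 : p ≤ 2) :
    u ^ p ≤ m ^ (p - 2) * m ^ 2 + p / 2 * (m ^ (p - 2) * (u ^ 2 - m ^ 2)) := by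
  have h := aux_conc (m := m ^ 2) (u := u ^ 2) (q := p / 2) (by positivity) (by positivity)
    (by linarith) (by linarith)
  have e : ∀ z : ℝ, 0 ≤ z → ∀ q : ℝ, (z ^ 2) ^ q = z ^ (2 * q) := by
    intro z hz q
    rw [← Real.rpow_natCast, ← Real.rpow_mul hz]; norm_num
  rw [e _ hu, e _ hm.le, e _ hm.le] at h
  rw [← aux_sq hm]
  convert h using 3 <;> ring_nf

lemma key_ineq {E : Type*} [NormedAddCommGroup E] [InnerProductSpace ℝ E] (a b : E) {p : ℝ}
    (hp1 : 1 < p) (hp2 : p ≤ 2) :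
    ‖a + b‖ ^ p ≤ ‖a‖ ^ p + p * inner ℝ (‖a‖ ^ (p - 2) • a) b + 2 * ‖b‖ ^ p := by
  rcases eq_or_ne a 0 with rfl | ha
  · have : (0:ℝ) ≤ ‖b‖ ^ p := by positivity
    simp only [zero_add, norm_zero, smul_zero, inner_zero_left, mul_zero, add_zero]
    rw [Real.zero_rpow (by linarith)]
    linarith
  rcases eq_or_ne b 0 with rfl | hb
  · have : (0:ℝ) ≤ ‖(0:E)‖ ^ p := by positivity
    simp only [add_zero, inner_zero_right, mul_zero]
    linarith
  have hr : 0 < ‖a‖ := norm_pos_iff.2 ha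
  have hs : 0 < ‖b‖ := norm_pos_iff.2 hb
  have hn := norm_add_sq_real a b
  have hc := (abs_le.1 (abs_real_inner_le_norm a b)).1
  rw [real_inner_smul_left]
  have hu := norm_nonneg (a + b)
  generalize ‖a + b‖ = u at *
  generalize inner ℝ a b = c at *
  generalize ‖a‖ = r at *
  generalize ‖b‖ = s at *
  have hS : 0 < s ^ (p - 2) := by positivity
  have hR : 0 < r ^ (p - 2) := by positivity
  rw [aux_sq hr, aux_sq hs]
  rcases le_total s r with h | h
  · have h1 := aux_conc2 hr hu hp1 hp2
    have h2 : r ^ (p - 2) ≤ s ^ (p - 2) := Real.rpow_le_rpow_of_nonpos hs h (by linarith)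
    have h3 := mul_le_mul_of_nonneg_right h2 (sq_nonneg s)
    have h4 : 0 ≤ r ^ (p - 2) * s ^ 2 := by positivity
    have h5 : p / 2 * (r ^ (p - 2) * s ^ 2) ≤ 1 * (r ^ (p - 2) * s ^ 2) :=
      mul_le_mul_of_nonneg_right (by linarith) h4
    rw [hn] at h1
    nlinarith
  · have h1 := aux_conc2 hs hu hp1 hp2
    have h2 : s ^ (p - 2) ≤ r ^ (p - 2) := Real.rpow_le_rpow_of_nonpos hr h (by linarith)
    have h6 := aux_conc hs hr.le (q := p - 1) (by linarith) (by linarith)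
    have e : p - 1 - 1 = p - 2 := by ring
    rw [e, aux_one hr, aux_one hs] at h6
    generalize s ^ (p - 2) = S at *
    generalize r ^ (p - 2) = R at *
    rw [hn] at h1
    have h7 : p * ((R - S) * (-c)) ≤ p * ((R - S) * (r * s)) :=
      mul_le_mul_of_nonneg_left
        (mul_le_mul_of_nonneg_left (by linarith) (by linarith)) (by linarith)
    have h8 : p * s * (R * r) ≤ p * s * (S * s + (p - 1) * (S * (r - s))) :=
      mul_le_mul_of_nonneg_left h6 (by positivity)
    have h9 : p / 2 * (S * r ^ 2) ≤ 1 * (R * r ^ 2) :=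
      mul_le_mul (by linarith) (mul_le_mul_of_nonneg_right h2 (sq_nonneg r)) (by positivity)
        (by norm_num)
    have h10 : 0 ≤ (p - 1) ^ 2 * (S * s ^ 2) := by positivity
    have h11 : 0 ≤ p * (2 - p) * (S * s * r) :=
      mul_nonneg (mul_nonneg (by linarith) (by linarith)) (by positivity)
    nlinarith

lemma aux_young {a b p : ℝ} (ha : 0 ≤ a) (hb : 0 ≤ b) (hp1 : 1 < p) :
    a ^ (p - 1) * b ≤ a ^ p + b ^ p := by
  have hA : 0 ≤ a ^ p := by positivity
  have hB : 0 ≤ b ^ p := by positivity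
  have e : ∀ z : ℝ, 0 ≤ z → z ^ (p - 1) * z = z ^ p := by
    intro z hz
    have := Real.rpow_add_one' hz (y := p - 1) (by linarith)
    rw [← this]; ring_nf
  rcases le_total a b with h | h
  · have : a ^ (p - 1) * b ≤ b ^ (p - 1) * b :=
      mul_le_mul_of_nonneg_right (Real.rpow_le_rpow ha h (by linarith)) hb
    rw [e b hb] at this; linarith
  · have : a ^ (p - 1) * b ≤ a ^ (p - 1) * a := mul_le_mul_of_nonneg_left h (by positivity)
    rw [e a ha] at this; linarith

lemma aux_inner_bound {E : Type*} [NormedAddCommGroup E] [InnerProductSpace ℝ E] (a b : E) {p : ℝ}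
    (hp1 : 1 < p) :
    |inner ℝ (‖a‖ ^ (p - 2) • a) b| ≤ ‖a‖ ^ p + ‖b‖ ^ p := by
  refine le_trans (abs_real_inner_le_norm _ _) ?_
  refine le_trans (le_of_eq ?_) (aux_young (norm_nonneg a) (norm_nonneg b) hp1)
  rcases eq_or_ne a 0 with rfl | ha
  · simp [Real.zero_rpow (show p - 1 ≠ 0 by linarith)]
  · rw [norm_smul, aux_one (norm_pos_iff.2 ha), Real.norm_of_nonneg (by positivity)]

lemma mart_step {E : Type*} [NormedAddCommGroup E] [InnerProductSpace ℝ E] [CompleteSpace E]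
    {Ω : Type*} {m mΩ : MeasurableSpace Ω} {μ : Measure Ω} [IsProbabilityMeasure μ]
    (hm : m ≤ mΩ) {A B : Ω → E} {p : ℝ} (hp1 : 1 < p) (hp2 : p ≤ 2)
    (hA : StronglyMeasurable[m] A) (hAp : Integrable (fun ω => ‖A ω‖ ^ p) μ)
    (hB : Integrable B μ) (hBp : Integrable (fun ω => ‖B ω‖ ^ p) μ)
    (hB0 : μ[B|m] =ᵐ[μ] 0) :
    Integrable (fun ω => ‖A ω + B ω‖ ^ p) μ ∧
    ∫ ω, ‖A ω + B ω‖ ^ p ∂μ ≤ ∫ ω, ‖A ω‖ ^ p ∂μ + 2 * ∫ ω, ‖B ω‖ ^ p ∂μ := by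
  have hAm : StronglyMeasurable[m] (fun ω => ‖A ω‖ ^ (p - 2) • A ω) := by
    refine StronglyMeasurable.smul ?_ hA
    exact (hA.norm.measurable.pow_const _).stronglyMeasurable
  have hI : Integrable (fun ω => inner ℝ (‖A ω‖ ^ (p - 2) • A ω) (B ω)) μ := by
    refine Integrable.mono' (hAp.add hBp) ?_ (ae_of_all _ fun ω => ?_)
    · exact (hAm.mono hm).aestronglyMeasurable.inner hB.1
    · exact aux_inner_bound _ _ hp1
  have hI0 : ∫ ω, inner ℝ (‖A ω‖ ^ (p - 2) • A ω) (B ω) ∂μ = 0 := by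
    have h := condExp_bilin_of_stronglyMeasurable_left (μ := μ) (innerSL ℝ (E := E)) hAm
      (g := B) hI hB
    rw [← integral_condExp hm]
    rw [← integral_zero Ω ℝ (μ := μ)]
    refine integral_congr_ae ?_
    refine h.trans ?_
    filter_upwards [hB0] with ω hω
    simp [hω]
  have hR : Integrable (fun ω => ‖A ω‖ ^ p + p * inner ℝ (‖A ω‖ ^ (p - 2) • A ω) (B ω)
      + 2 * ‖B ω‖ ^ p) μ := (hAp.add (hI.const_mul p)).add (hBp.const_mul 2)
  have hint : Integrable (fun ω => ‖A ω + B ω‖ ^ p) μ := by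
    refine Integrable.mono' hR ?_ (ae_of_all _ fun ω => ?_)
    · exact (((hA.mono hm).aestronglyMeasurable.add hB.1).norm.aemeasurable.pow_const
        p).aestronglyMeasurable
    · rw [Real.norm_of_nonneg (by positivity)]
      exact key_ineq _ _ hp1 hp2
  refine ⟨hint, (integral_mono hint hR fun ω => key_ineq _ _ hp1 hp2).trans (le_of_eq ?_)⟩
  have e1 := integral_add (hAp.add (hI.const_mul p)) (hBp.const_mul 2)
  have e2 := integral_add hAp (hI.const_mul p)
  simp only [Pi.add_apply] at e1
  rw [e1, e2, integral_const_mul, integral_const_mul, hI0]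
  ring

lemma mart_sum {E : Type*} [NormedAddCommGroup E] [InnerProductSpace ℝ E] [CompleteSpace E]
    {Ω : Type*} {mΩ : MeasurableSpace Ω} {μ : Measure Ω} [IsProbabilityMeasure μ]
    (𝓕 : Filtration ℕ mΩ) {s : ℕ → Ω → E} {p σ : ℝ} (hp1 : 1 < p) (hp2 : p ≤ 2) (hσ : 0 ≤ σ)
    (hs : ∀ t, StronglyMeasurable[𝓕 (t + 1)] (s t)) (hi : ∀ t, Integrable (s t) μ)
    (hip : ∀ t, Integrable (fun ω => ‖s t ω‖ ^ p) μ) (h0 : ∀ t, μ[s t|𝓕 t] =ᵐ[μ] 0)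
    (hmom : ∀ t, ∫ ω, ‖s t ω‖ ^ p ∂μ ≤ σ ^ p) (c : ℕ → ℝ) (hc : ∀ k, 0 ≤ c k) (N : ℕ) :
    StronglyMeasurable[𝓕 N] (fun ω => ∑ k ∈ Finset.range N, c k • s k ω) ∧
    Integrable (fun ω => ‖∑ k ∈ Finset.range N, c k • s k ω‖ ^ p) μ ∧
    ∫ ω, ‖∑ k ∈ Finset.range N, c k • s k ω‖ ^ p ∂μ ≤
      2 * (∑ k ∈ Finset.range N, c k ^ p) * σ ^ p := by
  induction N with
  | zero =>
    simp only [Finset.range_zero, Finset.sum_empty, norm_zero]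
    rw [Real.zero_rpow (by linarith)]
    exact ⟨stronglyMeasurable_const, by simp, by simp⟩
  | succ N ih =>
    obtain ⟨h1, h2, h3⟩ := ih
    simp only [Finset.sum_range_succ]
    have e : ∀ ω, ‖c N • s N ω‖ ^ p = c N ^ p * ‖s N ω‖ ^ p := fun ω => by
      rw [norm_smul, Real.norm_of_nonneg (hc N), Real.mul_rpow (hc N) (norm_nonneg _)]
    have := mart_step (𝓕.le N) (B := fun ω => c N • s N ω) hp1 hp2 h1 h2 ((hi N).smul (c N))
      (by simp only [e]; exact (hip N).const_mul _)
      (by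
        refine (condExp_smul (c N) (s N) (𝓕 N)).trans ?_
        filter_upwards [h0 N] with ω hω
        simp [hω])
    refine ⟨(h1.mono (𝓕.mono N.le_succ)).add ((hs N).const_smul (c N)), this.1, this.2.trans ?_⟩
    simp only [e]
    rw [integral_const_mul]
    have := mul_le_mul_of_nonneg_left (hmom N) (Real.rpow_nonneg (hc N) p)
    linarith

lemma mart_L1 {E : Type*} [NormedAddCommGroup E] [InnerProductSpace ℝ E] [CompleteSpace E]
    {Ω : Type*} {mΩ : MeasurableSpace Ω} {μ : Measure Ω} [IsProbabilityMeasure μ]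
    (𝓕 : Filtration ℕ mΩ) {s : ℕ → Ω → E} {p σ : ℝ} (hp1 : 1 < p) (hp2 : p ≤ 2) (hσ : 0 ≤ σ)
    (hs : ∀ t, StronglyMeasurable[𝓕 (t + 1)] (s t)) (hi : ∀ t, Integrable (s t) μ)
    (hip : ∀ t, Integrable (fun ω => ‖s t ω‖ ^ p) μ) (h0 : ∀ t, μ[s t|𝓕 t] =ᵐ[μ] 0)
    (hmom : ∀ t, ∫ ω, ‖s t ω‖ ^ p ∂μ ≤ σ ^ p) (c : ℕ → ℝ) (hc : ∀ k, 0 ≤ c k) (N : ℕ) :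
    ∫ ω, ‖∑ k ∈ Finset.range N, c k • s k ω‖ ∂μ ≤
      2 * √2 * (∑ k ∈ Finset.range N, c k ^ p) ^ (1 / p) * σ := by
  obtain ⟨-, h2, h3⟩ := mart_sum 𝓕 hp1 hp2 hσ hs hi hip h0 hmom c hc N
  have hiS : Integrable (fun ω => ‖∑ k ∈ Finset.range N, c k • s k ω‖) μ :=
    (integrable_finsetSum _ fun k _ => (hi k).smul (c k)).norm
  have hJ := (convexOn_rpow hp1.le).map_integral_le (μ := μ)
    (f := fun ω => ‖∑ k ∈ Finset.range N, c k • s k ω‖)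
    (Real.continuous_rpow_const (by linarith)).continuousOn isClosed_Ici
    (ae_of_all _ fun ω => norm_nonneg _) hiS h2
  have hJ' := hJ.trans h3
  have hI0 : 0 ≤ ∫ ω, ‖∑ k ∈ Finset.range N, c k • s k ω‖ ∂μ :=
    integral_nonneg fun ω => norm_nonneg _
  have hS0 : 0 ≤ ∑ k ∈ Finset.range N, c k ^ p :=
    Finset.sum_nonneg fun k _ => Real.rpow_nonneg (hc k) p
  have hp0 : p ≠ 0 := by linarith
  have h5 := Real.rpow_le_rpow (by positivity) hJ' (show 0 ≤ 1 / p by positivity)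
  rw [← Real.rpow_mul hI0, mul_one_div_cancel hp0, Real.rpow_one,
    Real.mul_rpow (by positivity) (by positivity), Real.mul_rpow (by positivity) hS0,
    ← Real.rpow_mul hσ, mul_one_div_cancel hp0, Real.rpow_one] at h5
  refine h5.trans ?_
  have h6 : (2:ℝ) ^ (1 / p) ≤ 2 * √2 := by
    have : (2:ℝ) ^ (1 / p) ≤ 2 ^ (1:ℝ) :=
      Real.rpow_le_rpow_of_exponent_le (by norm_num) ((div_le_one (by linarith)).2 hp1.le)
    rw [Real.rpow_one] at this
    have : 1 ≤ √2 := Real.one_le_sqrt.2 (by norm_num)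
    linarith
  gcongr

noncomputable def snorm' {n : ℕ} {E : Type*} [NormedAddCommGroup E] (u : Fin n → E) : ℝ :=
  √(∑ i, ‖u i‖ ^ 2)

section
variable {n d : ℕ} {E : Type*} [NormedAddCommGroup E] [NormedSpace ℝ E]

lemma sn_eq (u : Fin n → E) : snorm' u = ‖(WithLp.toLp 2 u : PiLp 2 fun _ : Fin n => E)‖ := by
  rw [PiLp.norm_eq_of_L2]; rfl

lemma sn_nonneg (u : Fin n → E) : 0 ≤ snorm' u := Real.sqrt_nonneg _

lemma sn_add (u w : Fin n → E) : snorm' (fun i => u i + w i) ≤ snorm' u + snorm' w := by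
  rw [sn_eq, sn_eq, sn_eq]
  exact norm_add_le (WithLp.toLp 2 u : PiLp 2 fun _ : Fin n => E) (WithLp.toLp 2 w)

lemma sn_sub (u w : Fin n → E) : snorm' (fun i => u i - w i) ≤ snorm' u + snorm' w := by
  rw [sn_eq, sn_eq, sn_eq]
  exact norm_sub_le (WithLp.toLp 2 u : PiLp 2 fun _ : Fin n => E) (WithLp.toLp 2 w)

lemma sn_smul (c : ℝ) (hc : 0 ≤ c) (u : Fin n → E) : snorm' (fun i => c • u i) = c * snorm' u := by
  rw [sn_eq, sn_eq]
  have := norm_smul c (WithLp.toLp 2 u : PiLp 2 fun _ : Fin n => E)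
  rw [Real.norm_of_nonneg hc] at this
  exact this

lemma sn_mono {c : ℝ} (hc : 0 ≤ c) (u w : Fin n → E) (h : ∀ i, ‖u i‖ ≤ c * ‖w i‖) :
    snorm' u ≤ c * snorm' w := by
  unfold snorm'
  refine Real.sqrt_le_iff.2 ⟨by positivity, ?_⟩
  rw [mul_pow, Real.sq_sqrt (Finset.sum_nonneg fun i _ => by positivity), Finset.mul_sum]
  refine Finset.sum_le_sum fun i _ => ?_
  rw [← mul_pow]
  exact pow_le_pow_left₀ (norm_nonneg _) (h i) 2

lemma sn_const {c : ℝ} (hc : 0 ≤ c) (u : Fin n → E) (h : ∀ i, ‖u i‖ ≤ c) :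
    snorm' u ≤ √n * c := by
  unfold snorm'
  refine Real.sqrt_le_iff.2 ⟨by positivity, ?_⟩
  rw [mul_pow, Real.sq_sqrt (by positivity)]
  calc _ ≤ ∑ i : Fin n, c ^ 2 :=
        Finset.sum_le_sum fun i _ => pow_le_pow_left₀ (norm_nonneg _) (h i) 2
    _ = _ := by simp

lemma sn_le_sum (u : Fin n → E) : snorm' u ≤ ∑ i, ‖u i‖ := by
  unfold snorm'
  refine Real.sqrt_le_iff.2 ⟨Finset.sum_nonneg fun i _ => norm_nonneg _, ?_⟩
  exact Finset.sum_sq_le_sq_sum_of_nonneg fun i _ => norm_nonneg _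

lemma sn_finsum {ι : Type*} (s : Finset ι) (u : ι → Fin n → E) :
    snorm' (fun i => ∑ k ∈ s, u k i) ≤ ∑ k ∈ s, snorm' (u k) := by
  classical
  induction s using Finset.induction_on with
  | empty => simp [snorm']
  | insert a s ha ih =>
    simp only [Finset.sum_insert ha]
    exact (sn_add _ _).trans (by linarith)

end

lemma sn_op {n d : ℕ} (A : Matrix (Fin n) (Fin n) ℝ) (u : Fin n → EuclideanSpace ℝ (Fin d)) :
    snorm' (fun i => ∑ r, A i r • u r) ≤
      ‖Matrix.toEuclideanCLM (𝕜 := ℝ) (n := Fin n) A‖ * snorm' u := by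
  unfold snorm'
  refine Real.sqrt_le_iff.2 ⟨by positivity, ?_⟩
  rw [mul_pow, Real.sq_sqrt (Finset.sum_nonneg fun i _ => by positivity)]
  simp only [EuclideanSpace.real_norm_sq_eq]
  rw [Finset.sum_comm, Finset.sum_comm (f := fun i j => (u i).ofLp j ^ 2), Finset.mul_sum]
  refine Finset.sum_le_sum fun j _ => ?_
  have h := (Matrix.toEuclideanCLM (𝕜 := ℝ) (n := Fin n) A).le_opNorm
    (WithLp.toLp 2 fun r => (u r).ofLp j)
  have h2 := pow_le_pow_left₀ (norm_nonneg _) h 2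
  rw [mul_pow, EuclideanSpace.real_norm_sq_eq, EuclideanSpace.real_norm_sq_eq] at h2
  refine le_trans (le_of_eq ?_) h2
  refine Finset.sum_congr rfl fun i _ => ?_
  simp [Matrix.mulVec, dotProduct]

lemma consensus {n d : ℕ} (hn : 0 < n) (W : Matrix (Fin n) (Fin n) ℝ)
    (hWrow : ∀ i, ∑ r, W i r = 1) (hWcol : ∀ r, ∑ i, W i r = 1)
    (lam : ℝ)
    (hlam : lam = ‖Matrix.toEuclideanCLM (𝕜 := ℝ) (n := Fin n)
      (W - (n : ℝ)⁻¹ • Matrix.of (fun _ _ => (1 : ℝ)))‖)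
    (hlam1 : lam < 1) (α : ℝ) (hα : 0 < α) (x0 : EuclideanSpace ℝ (Fin d))
    (X Y : ℕ → Fin n → EuclideanSpace ℝ (Fin d)) (hX0 : ∀ i, X 0 i = x0)
    (hX : ∀ t i, X (t + 1) i = ∑ r, W i r • (X t r - Y t r)) (hY : ∀ t i, ‖Y t i‖ ≤ α) (t : ℕ) :
    snorm' (fun i => X t i - X (t + 1) i) ≤ n * (2 * α * lam / (1 - lam) + α) := by
  have hn' : (n : ℝ) ≠ 0 := by positivity
  have hl0 : 0 ≤ lam := hlam ▸ norm_nonneg _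
  have hl1 : 0 < 1 - lam := by linarith
  set av : (Fin n → EuclideanSpace ℝ (Fin d)) → EuclideanSpace ℝ (Fin d) :=
    fun u => (n : ℝ)⁻¹ • ∑ r, u r with hav
  have havn : ∀ t, av (X (t + 1)) = av (X t) - av (Y t) := by
    intro t
    simp only [hav]
    rw [← smul_sub, ← Finset.sum_sub_distrib]
    congr 1
    simp only [hX]
    rw [Finset.sum_comm]
    refine Finset.sum_congr rfl fun r _ => ?_
    rw [← Finset.sum_smul, hWcol, one_smul]
  have hD : ∀ t i, X (t + 1) i - av (X (t + 1)) =
      ∑ r, (W - (n : ℝ)⁻¹ • Matrix.of (fun _ _ => (1 : ℝ)) : Matrix (Fin n) (Fin n) ℝ) i r •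
        ((X t r - av (X t)) - Y t r) := by
    intro t i
    have e : ∀ r, (W - (n : ℝ)⁻¹ • Matrix.of (fun _ _ => (1 : ℝ)) : Matrix (Fin n) (Fin n) ℝ) i r •
        ((X t r - av (X t)) - Y t r) = W i r • (X t r - Y t r) - W i r • av (X t)
          - ((n : ℝ)⁻¹ • X t r - (n : ℝ)⁻¹ • Y t r) + (n : ℝ)⁻¹ • av (X t) := by
      intro r
      simp only [Matrix.sub_apply, Matrix.smul_apply, Matrix.of_apply, smul_eq_mul, mul_one]
      module
    simp only [e]
    rw [Finset.sum_add_distrib, Finset.sum_sub_distrib, Finset.sum_sub_distrib, ← hX,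
      ← Finset.sum_smul, hWrow, Finset.sum_sub_distrib, ← Finset.smul_sum, ← Finset.smul_sum, havn]
    simp only [hav, Finset.sum_const, Finset.card_univ, Fintype.card_fin]
    rw [← Nat.cast_smul_eq_nsmul ℝ, smul_smul (n : ℝ), mul_inv_cancel₀ hn']
    module
  have hDb : ∀ t, snorm' (fun i => X t i - av (X t)) ≤ √n * (α * lam / (1 - lam)) := by
    intro t
    induction t with
    | zero =>
      have : (fun i => X 0 i - av (X 0)) = fun _ => 0 := by
        funext i
        simp only [hav, hX0, Finset.sum_const, Finset.card_univ, Fintype.card_fin]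
        rw [← Nat.cast_smul_eq_nsmul ℝ, smul_smul, inv_mul_cancel₀ hn', one_smul, sub_self]
      rw [this]
      simp only [snorm', norm_zero]
      simp
      positivity
    | succ t ih =>
      simp only [hD]
      refine (sn_op _ _).trans ?_
      rw [← hlam]
      have h1 := sn_sub (fun i => X t i - av (X t)) (Y t)
      have h2 := sn_const hα.le (Y t) (hY t)
      calc _ ≤ lam * (√n * (α * lam / (1 - lam)) + √n * α) :=
            mul_le_mul_of_nonneg_left (by linarith) hl0
        _ = _ := by field_simp; ring
  have hA : snorm' (fun _ : Fin n => av (Y t)) ≤ √n * α := by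
    refine sn_const hα.le _ fun _ => ?_
    simp only [hav]
    rw [norm_smul, Real.norm_of_nonneg (by positivity)]
    calc _ ≤ (n : ℝ)⁻¹ * ∑ _r : Fin n, α :=
          mul_le_mul_of_nonneg_left ((norm_sum_le _ _).trans
            (Finset.sum_le_sum fun r _ => hY t r)) (by positivity)
      _ = α := by simp; field_simp
  have e : (fun i => X t i - X (t + 1) i) = fun i =>
      ((X t i - av (X t)) - (X (t + 1) i - av (X (t + 1)))) + av (Y t) := by
    funext i
    rw [havn t]; abel
  rw [e]
  have h1 := sn_add (fun i => (X t i - av (X t)) - (X (t + 1) i - av (X (t + 1))))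
    (fun _ => av (Y t))
  have h2 := sn_sub (fun i => X t i - av (X t)) (fun i => X (t + 1) i - av (X (t + 1)))
  have h3 := hDb t
  have h4 := hDb (t + 1)
  have hs : √(n : ℝ) ≤ n := by
    rw [Real.sqrt_le_iff]
    refine ⟨by positivity, ?_⟩
    have : (1:ℝ) ≤ n := by exact_mod_cast hn
    nlinarith
  calc _ ≤ √n * (2 * α * lam / (1 - lam) + α) := by
        have : √n * (2 * α * lam / (1 - lam) + α)
          = √n * (α * lam / (1 - lam)) + √n * (α * lam / (1 - lam)) + √n * α := by ring
        linarith
    _ ≤ _ := mul_le_mul_of_nonneg_right hs (by positivity)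

/-- (Stacked gradient estimation errors.)  Under Assumptions 2–4 and
GT-NSGDm, for every `t` the stacked gradient estimation error satisfies
`E[‖v^t - ∇F(x^t)‖] ≤ β^{t+1} ‖∇F(1ₙ ⊗ x̄⁰)‖
  + 2√2 (∑_{k=0}^t β^{(t-k)p} (1-β)^p)^{1/p} n σ
  + n ∑_{k=0}^t β^{t-k+1} (2αλ/(1-λ) + α) L`,
where `‖v^t - ∇F(x^t)‖ = (∑ i, ‖v_i^t - ∇f_i(x_i^t)‖²)^{1/2}` is the norm of the stacked
vector in `ℝ^{nd}` and `∇F(1ₙ ⊗ x̄⁰) = [∇f_1(x̄⁰); …; ∇f_n(x̄⁰)]`.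

The heavy-tailed noise Assumption 3 is formalized via a filtration `𝓕`: the iterates are
adapted, the stochastic gradients `g_i^t` are `𝓕 (t+1)`-measurable and integrable,
conditionally unbiased given `𝓕 t`, and have conditional `p`-th moment bounded by `σ^p`. -/
theorem stacked_gradient_estimation_error (d n : ℕ) (hn : 0 < n)
    (Ω : Type*) (mΩ : MeasurableSpace Ω) (μ : Measure Ω) (hμ : IsProbabilityMeasure μ)
    (f : Fin n → EuclideanSpace ℝ (Fin d) → ℝ)
    (gradf : Fin n → EuclideanSpace ℝ (Fin d) → EuclideanSpace ℝ (Fin d))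
    (hgrad : ∀ i z, HasGradientAt (f i) (gradf i z) z)
    (L : ℝ) (hL : 0 < L)
    (hsmooth : ∀ i z w, ‖gradf i z - gradf i w‖ ≤ L * ‖z - w‖)
    (p σ : ℝ) (hp1 : 1 < p) (hp2 : p ≤ 2) (hσ : 0 ≤ σ)
    (W : Matrix (Fin n) (Fin n) ℝ)
    (hWnonneg : ∀ i r, 0 ≤ W i r)
    (hWprim : ∃ k : ℕ, 0 < k ∧ ∀ i r, (0 : ℝ) < (W ^ k : Matrix (Fin n) (Fin n) ℝ) i r)
    (hWrow : ∀ i, ∑ r, W i r = 1) (hWcol : ∀ r, ∑ i, W i r = 1)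
    (lam : ℝ)
    (hlam : lam = ‖Matrix.toEuclideanCLM (𝕜 := ℝ) (n := Fin n)
      (W - (n : ℝ)⁻¹ • Matrix.of (fun _ _ => (1 : ℝ)))‖)
    (hlam1 : lam < 1)
    (𝓕 : Filtration ℕ mΩ)
    (α β : ℝ) (hα : 0 < α) (hβ : β ∈ Set.Ico (0 : ℝ) 1)
    (xbar0 : EuclideanSpace ℝ (Fin d))
    (x v y g : ℕ → Fin n → Ω → EuclideanSpace ℝ (Fin d))
    (hx0 : ∀ i ω, x 0 i ω = xbar0)
    (hv0 : ∀ i ω, v 0 i ω = (1 - β) • g 0 i ω)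
    (hvrec : ∀ t i ω, v (t + 1) i ω = β • v t i ω + (1 - β) • g (t + 1) i ω)
    (hy0 : ∀ i ω, y 0 i ω = ∑ r, W i r • v 0 r ω)
    (hyrec : ∀ t i ω, y (t + 1) i ω = ∑ r, W i r • (y t r ω + v (t + 1) r ω - v t r ω))
    (hxrec : ∀ t i ω, x (t + 1) i ω = ∑ r, W i r • (x t r ω - (α / ‖y t r ω‖) • y t r ω))
    (hadapt : ∀ i, Adapted 𝓕 fun t => x t i)
    (hgmeas : ∀ t i, StronglyMeasurable[𝓕 (t + 1)] (g t i))
    (hgint : ∀ t i, Integrable (g t i) μ)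
    (hunbiased : ∀ t i, μ[g t i|𝓕 t] =ᵐ[μ] fun ω => gradf i (x t i ω))
    (hmomint : ∀ t i, Integrable (fun ω => ‖g t i ω - gradf i (x t i ω)‖ ^ p) μ)
    (hmoment : ∀ t i, ∀ᵐ ω ∂μ,
      (μ[fun ω' => ‖g t i ω' - gradf i (x t i ω')‖ ^ p|𝓕 t]) ω ≤ σ ^ p) :
    ∀ t : ℕ,
      ∫ ω, Real.sqrt (∑ i, ‖v t i ω - gradf i (x t i ω)‖ ^ 2) ∂μ ≤
        β ^ (t + 1) * Real.sqrt (∑ i, ‖gradf i xbar0‖ ^ 2) +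
        2 * Real.sqrt 2 *
          (∑ k ∈ Finset.range (t + 1), (β ^ (t - k)) ^ p * (1 - β) ^ p) ^ (1 / p) *
          (n : ℝ) * σ +
        (n : ℝ) * (∑ k ∈ Finset.range (t + 1), β ^ (t - k + 1)) *
          ((2 * α * lam / (1 - lam) + α) * L) := by
  intro t
  obtain ⟨hβ0, hβ1⟩ := hβ
  have hl0 : 0 ≤ lam := hlam ▸ norm_nonneg _
  have hK0 : 0 ≤ 2 * α * lam / (1 - lam) + α := by
    have : 0 < 1 - lam := by linarith
    positivity
  have hcont : ∀ i, Continuous (gradf i) := by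
    intro i
    refine (LipschitzWith.of_dist_le_mul (K := L.toNNReal) fun z w => ?_).continuous
    rw [dist_eq_norm, dist_eq_norm, Real.coe_toNNReal L hL.le]
    exact hsmooth i z w
  -- unrolled recursion
  have hrec : ∀ t i ω, v t i ω - gradf i (x t i ω) =
      ((∑ k ∈ Finset.range (t + 1), (β ^ (t - k) * (1 - β)) • (g k i ω - gradf i (x k i ω)))
        + ∑ k ∈ Finset.range t, β ^ (t - k) • (gradf i (x k i ω) - gradf i (x (k + 1) i ω)))
        - β ^ (t + 1) • gradf i xbar0 := by
    intro t i ω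
    induction t with
    | zero =>
      simp only [hv0, hx0, zero_add, Finset.range_one, Finset.sum_singleton, Finset.range_zero,
        Finset.sum_empty]
      simp
      module
    | succ t ih =>
      have e1 : ∑ k ∈ Finset.range (t + 1), (β ^ (t + 1 - k) * (1 - β)) •
          (g k i ω - gradf i (x k i ω)) = β • ∑ k ∈ Finset.range (t + 1),
          (β ^ (t - k) * (1 - β)) • (g k i ω - gradf i (x k i ω)) := by
        rw [Finset.smul_sum]
        refine Finset.sum_congr rfl fun k hk => ?_
        have : t + 1 - k = (t - k) + 1 := by have := Finset.mem_range.1 hk; omega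
        rw [this, smul_smul]; congr 1; ring
      have e2 : ∑ k ∈ Finset.range t, β ^ (t + 1 - k) •
          (gradf i (x k i ω) - gradf i (x (k + 1) i ω)) = β • ∑ k ∈ Finset.range t,
          β ^ (t - k) • (gradf i (x k i ω) - gradf i (x (k + 1) i ω)) := by
        rw [Finset.smul_sum]
        refine Finset.sum_congr rfl fun k hk => ?_
        have : t + 1 - k = (t - k) + 1 := by have := Finset.mem_range.1 hk; omega
        rw [this, smul_smul]; congr 1; ring
      have e3 : v t i ω = (v t i ω - gradf i (x t i ω)) + gradf i (x t i ω) := by abel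
      rw [Finset.sum_range_succ _ (t + 1), e1, Finset.sum_range_succ (fun k => β ^ (t + 1 - k) •
        (gradf i (x k i ω) - gradf i (x (k + 1) i ω))) t, e2, hvrec, e3, ih]
      have e4 : t + 1 - t = 1 := by omega
      rw [e4, Nat.sub_self, pow_succ β (t + 1)]
      module
  have hcons : ∀ k ω, snorm' (fun i => x k i ω - x (k + 1) i ω) ≤
      n * (2 * α * lam / (1 - lam) + α) := by
    intro k ω
    refine consensus hn W hWrow hWcol lam hlam hlam1 α hα xbar0 (fun t i => x t i ω)
      (fun t i => (α / ‖y t i ω‖) • y t i ω) (fun i => hx0 i ω) (fun t i => hxrec t i ω) ?_ k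
    intro t i
    rw [norm_smul, Real.norm_of_nonneg (by positivity)]
    rcases eq_or_ne ‖y t i ω‖ 0 with h | h
    · rw [h]; simpa using hα.le
    · rw [div_mul_cancel₀ _ h]
  set c : ℕ → ℝ := fun k => β ^ (t - k) * (1 - β) with hcdef
  have hc : ∀ k, 0 ≤ c k := fun k => mul_nonneg (pow_nonneg hβ0 _) (by linarith)
  have hgi : ∀ k i, Integrable (fun ω => gradf i (x k i ω)) μ := fun k i =>
    integrable_condExp.congr (hunbiased k i)
  have hsi : ∀ k i, Integrable (fun ω => g k i ω - gradf i (x k i ω)) μ := fun k i =>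
    (hgint k i).sub (hgi k i)
  have hgm : ∀ k i, StronglyMeasurable[𝓕 k] (fun ω => gradf i (x k i ω)) := fun k i =>
    ((hcont i).measurable.comp (hadapt i k)).stronglyMeasurable
  have hM : ∀ i, ∫ ω, ‖∑ k ∈ Finset.range (t + 1), c k • (g k i ω - gradf i (x k i ω))‖ ∂μ ≤
      2 * √2 * (∑ k ∈ Finset.range (t + 1), c k ^ p) ^ (1 / p) * σ := by
    intro i
    refine mart_L1 𝓕 (s := fun k ω => g k i ω - gradf i (x k i ω)) hp1 hp2 hσ
      (fun k => (hgmeas k i).sub ((hgm k i).mono (𝓕.mono k.le_succ)))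
      (fun k => hsi k i) (fun k => hmomint k i) (fun k => ?_) (fun k => ?_) c hc (t + 1)
    · refine (condExp_sub (hgint k i) (hgi k i) (𝓕 k)).trans ?_
      have := condExp_of_stronglyMeasurable (μ := μ) (𝓕.le k) (hgm k i) (hgi k i)
      filter_upwards [hunbiased k i] with ω hω
      rw [Pi.sub_apply, hω, this]
      simp
    · rw [← integral_condExp (𝓕.le k)]
      calc _ ≤ ∫ _ω, σ ^ p ∂μ :=
            integral_mono_ae integrable_condExp (integrable_const _) (hmoment k i)
        _ = σ ^ p := by simp
  have hMi : ∀ i, Integrable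
      (fun ω => ‖∑ k ∈ Finset.range (t + 1), c k • (g k i ω - gradf i (x k i ω))‖) μ := fun i =>
    (integrable_finsetSum _ fun k _ => (hsi k i).smul (c k)).norm
  have hpt : ∀ ω, √(∑ i, ‖v t i ω - gradf i (x t i ω)‖ ^ 2) ≤
      (∑ i, ‖∑ k ∈ Finset.range (t + 1), c k • (g k i ω - gradf i (x k i ω))‖) +
      (β ^ (t + 1) * √(∑ i, ‖gradf i xbar0‖ ^ 2) +
        (n : ℝ) * (∑ k ∈ Finset.range (t + 1), β ^ (t - k + 1)) *
          ((2 * α * lam / (1 - lam) + α) * L)) := by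
    intro ω
    change snorm' (fun i => v t i ω - gradf i (x t i ω)) ≤ _ +
      (β ^ (t + 1) * snorm' (fun i => gradf i xbar0) + _)
    simp only [hrec]
    refine (sn_sub _ _).trans ?_
    rw [sn_smul _ (pow_nonneg hβ0 _)]
    have h1 := sn_add
      (fun i => ∑ k ∈ Finset.range (t + 1), (β ^ (t - k) * (1 - β)) •
        (g k i ω - gradf i (x k i ω)))
      (fun i => ∑ k ∈ Finset.range t, β ^ (t - k) •
        (gradf i (x k i ω) - gradf i (x (k + 1) i ω)))
    have h2 := sn_le_sum (fun i => ∑ k ∈ Finset.range (t + 1), (β ^ (t - k) * (1 - β)) •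
        (g k i ω - gradf i (x k i ω)))
    have h3 : snorm' (fun i => ∑ k ∈ Finset.range t, β ^ (t - k) •
        (gradf i (x k i ω) - gradf i (x (k + 1) i ω))) ≤
        (n : ℝ) * (∑ k ∈ Finset.range (t + 1), β ^ (t - k + 1)) *
          ((2 * α * lam / (1 - lam) + α) * L) := by
      refine (sn_finsum (Finset.range t) (fun k i => β ^ (t - k) •
        (gradf i (x k i ω) - gradf i (x (k + 1) i ω)))).trans ?_
      rw [Finset.sum_range_succ', mul_add, add_mul]
      refine le_add_of_le_of_nonneg ?_ (by positivity)
      rw [Finset.mul_sum, Finset.sum_mul]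
      refine Finset.sum_le_sum fun k hk => ?_
      rw [sn_smul _ (pow_nonneg hβ0 _)]
      have e : t - (k + 1) + 1 = t - k := by have := Finset.mem_range.1 hk; omega
      rw [e]
      have h4 := sn_mono hL.le (fun i => gradf i (x k i ω) - gradf i (x (k + 1) i ω))
        (fun i => x k i ω - x (k + 1) i ω) (fun i => hsmooth i _ _)
      have h5 := mul_le_mul_of_nonneg_left (hcons k ω) hL.le
      have h6 := mul_le_mul_of_nonneg_left (h4.trans h5) (pow_nonneg hβ0 (t - k))
      refine h6.trans (le_of_eq (by ring))
    linarith
  have hRi : Integrable (fun ω =>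
      ∑ i, ‖∑ k ∈ Finset.range (t + 1), c k • (g k i ω - gradf i (x k i ω))‖) μ :=
    integrable_finsetSum _ fun i _ => hMi i
  have hfin := integral_mono_of_nonneg (μ := μ) (ae_of_all _ fun ω => Real.sqrt_nonneg _)
    (hRi.add (integrable_const _)) (ae_of_all _ hpt)
  refine hfin.trans ?_
  have e1 := integral_add hRi (integrable_const (μ := μ) (β ^ (t + 1) * √(∑ i, ‖gradf i xbar0‖ ^ 2) +
        (n : ℝ) * (∑ k ∈ Finset.range (t + 1), β ^ (t - k + 1)) *
          ((2 * α * lam / (1 - lam) + α) * L)))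
  simp only [Pi.add_apply]
  rw [e1, integral_finsetSum _ fun i _ => hMi i]
  have h7 := Finset.sum_le_sum fun i (_ : i ∈ Finset.univ) => hM i
  have e2 : ∑ k ∈ Finset.range (t + 1), c k ^ p =
      ∑ k ∈ Finset.range (t + 1), (β ^ (t - k)) ^ p * (1 - β) ^ p :=
    Finset.sum_congr rfl fun k _ => Real.mul_rpow (pow_nonneg hβ0 _) (by linarith)
  rw [e2] at h7
  simp only [Finset.sum_const, Finset.card_univ, Fintype.card_fin, nsmul_eq_mul] at h7
  simp only [integral_const, probReal_univ, one_smul]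
  linarith
end
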